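/- arXiv:math/0504455 — 5 statements merged into one kernel-verified Lean document; each statement's English description precedes it below -/
import Mathlib

section
/- For all M, A, P > 0 there exist T', C₁, C₂ > 0, depending only on M, A and P, with the following property. Let T, L > 0; let a : ℝ × ℝ × ℝ × [0,T] → ℝ be continuous and positive, periodic in its third (spatial) argument with period L (a(p,q,x+L,t) = a(p,q,x,t)), and satisfy a(p,q,x,t)·p² ≥ A whenever |p| ≥ P; let b : ℝ → ℝ be continuous; and let u : ℝ × [0,T) → ℝ be continuous, with continuous partial derivatives u_t, u_x, u_{xx} on ℝ × (0,T), satisfying u_t = a(u_x,u,x,t)·u_{xx} + b(u_x), spatially periodic with period L, and with osc_{x ∈ ℝ} u(x,t) ≤ M for every t. Then for every x ∈ ℝ and every t ∈ (0, min(T,T')): |u_x(x,t)| ≤ C₁·√t·(1+t)·exp(C₂/t). -/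
/-- Necessary second order condition at a local minimum, with explicit derivatives. -/
lemma IsLocalMin.second_deriv_nonneg {f f' : ℝ → ℝ} {c x : ℝ} (hmin : IsLocalMin f x)
    (hf : ∀ y, HasDerivAt f (f' y) y) (hf' : HasDerivAt f' c x) : 0 ≤ c := by
  by_contra! hc
  have hd : deriv f = f' := funext fun y => (hf y).deriv
  have hmax : IsLocalMax f x := by
    apply isLocalMax_of_deriv_deriv_neg
    · rwa [hd, hf'.deriv]
    · exact hmin.deriv_eq_zero
    · exact (hf x).continuousAt
  have hconst : f =ᶠ[nhds x] fun _ => f x := by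
    filter_upwards [hmin, hmax] with y h₁ h₂ using le_antisymm h₂ h₁
  have hzero := hconst.deriv.deriv_eq
  rw [hd, hf'.deriv] at hzero
  simp at hzero
  exact hc.ne hzero

/-- A derivative is nonpositive at a right endpoint where the function attains its minimum. -/
lemma HasDerivAt.nonpos_of_left_min {f : ℝ → ℝ} {c d t : ℝ} (hf : HasDerivAt f c t)
    (hd : d < t) (hmin : ∀ s ∈ Set.Icc d t, f t ≤ f s) : c ≤ 0 := by
  have hw := (hasDerivWithinAt_iff_tendsto_slope' (s := Set.Iio t) (by simp)).1
    hf.hasDerivWithinAt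
  refine le_of_tendsto hw ?_
  filter_upwards [Ioo_mem_nhdsLT hd] with s hs
  rw [slope_def_field]
  exact div_nonpos_of_nonneg_of_nonpos
    (sub_nonneg.2 (hmin s ⟨hs.1.le, hs.2.le⟩)) (sub_nonpos.2 hs.2.le)

/-- The two-point function `y - x - ψ(u(y,t) - u(x,t), t)` with the barrier
`ψ(z,t) = exp((α z - β)/t) - exp(-β/t)`. -/
noncomputable def twoPoint (α β : ℝ) (u : ℝ → ℝ → ℝ) (x y t : ℝ) : ℝ :=
  y - x - (Real.exp ((α * (u y t - u x t) - β) / t) - Real.exp (-β / t))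

/-- At an interior spatial minimum of the two-point function, which is also a minimum
backwards in time, the difference `u(y,t) - u(x,t)` cannot be positive. -/
lemma twoPoint_no_interior_min {α β A P d t x y ay ax c : ℝ} {u ux : ℝ → ℝ → ℝ}
    {uty utx uxxy uxxx : ℝ}
    (hα : 0 < α) (hβ : 0 < β) (hαβ : β ≤ 2 * A * α ^ 2) (hd : 0 < d) (hdt : d < t)
    (hz : 0 < u y t - u x t)
    (hsteep : Real.exp ((α * (u y t - u x t) - β) / t) * (α / t) * P ≤ 1)
    (huty : HasDerivAt (fun s => u y s) uty t) (hutx : HasDerivAt (fun s => u x s) utx t)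
    (hux : ∀ w, HasDerivAt (fun v => u v t) (ux w t) w)
    (huxxy : HasDerivAt (fun v => ux v t) uxxy y)
    (huxxx : HasDerivAt (fun v => ux v t) uxxx x)
    (hay : 0 < ay) (hax : 0 < ax)
    (hayp : P ≤ ux y t → A ≤ ay * ux y t ^ 2) (haxp : P ≤ ux x t → A ≤ ax * ux x t ^ 2)
    (heqy : uty = ay * uxxy + c) (heqx : ux x t = ux y t → utx = ax * uxxx + c)
    (hminy : IsLocalMin (fun w => twoPoint α β u x w t) y)
    (hminx : IsLocalMin (fun w => twoPoint α β u w y t) x)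
    (hmint : ∀ s ∈ Set.Icc d t, twoPoint α β u x y t ≤ twoPoint α β u x y s) : False := by
  have ht : 0 < t := hd.trans hdt
  set E := Real.exp ((α * (u y t - u x t) - β) / t) with hE
  have hEpos : 0 < E := Real.exp_pos _
  have hy1 : ∀ w, HasDerivAt (fun w => twoPoint α β u x w t)
      (1 - Real.exp ((α * (u w t - u x t) - β) / t) * (α * ux w t / t)) w := by
    intro w
    have h := ((((((hux w).sub_const (u x t)).const_mul α).sub_const β).div_const t).exp).sub_const
      (Real.exp (-β / t))
    exact ((hasDerivAt_id w).sub_const x).sub h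
  have hx1 : ∀ w, HasDerivAt (fun w => twoPoint α β u w y t)
      (-1 + Real.exp ((α * (u y t - u w t) - β) / t) * (α * ux w t / t)) w := by
    intro w
    have h := ((((((hux w).const_sub (u y t)).const_mul α).sub_const β).div_const t).exp).sub_const
      (Real.exp (-β / t))
    have h' := ((hasDerivAt_id w).const_sub y).sub h
    refine h'.congr_deriv ?_
    ring
  have hy2 : HasDerivAt
      (fun w => 1 - Real.exp ((α * (u w t - u x t) - β) / t) * (α * ux w t / t))
      (-(E * (α * ux y t / t) * (α * ux y t / t) + E * (α * uxxy / t))) y := by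
    have h := ((((((hux y).sub_const (u x t)).const_mul α).sub_const β).div_const t).exp)
    exact (h.mul ((huxxy.const_mul α).div_const t)).const_sub 1
  have hx2 : HasDerivAt
      (fun w => -1 + Real.exp ((α * (u y t - u w t) - β) / t) * (α * ux w t / t))
      (-(E * (α * ux x t / t) * (α * ux x t / t)) + E * (α * uxxx / t)) x := by
    have h := ((((((hux x).const_sub (u y t)).const_mul α).sub_const β).div_const t).exp)
    refine ((h.mul ((huxxx.const_mul α).div_const t)).const_add (-1)).congr_deriv ?_
    rw [← hE]
    ring
  have ht1 : HasDerivAt (fun s => twoPoint α β u x y s)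
      (-(E * ((α * (uty - utx) * t - (α * (u y t - u x t) - β)) / t ^ 2)
        - Real.exp (-β / t) * (β / t ^ 2))) t := by
    have h₁ := (((((huty.sub hutx).const_mul α).sub_const β).div (hasDerivAt_id t) ht.ne')).exp
    have h₂ := (((hasDerivAt_const t (-β)).div (hasDerivAt_id t) ht.ne')).exp
    refine ((h₁.sub h₂).const_sub (y - x)).congr_deriv ?_
    simp only [Pi.sub_apply, id, Pi.div_apply]
    rw [← hE]
    ring
  have hcy := hminy.hasDerivAt_eq_zero (hy1 y)
  have hcx := hminx.hasDerivAt_eq_zero (hx1 x)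
  rw [← hE] at hcy hcx
  have hsy := hminy.second_deriv_nonneg hy1 hy2
  have hsx := hminx.second_deriv_nonneg hx1 hx2
  have htt := ht1.nonpos_of_left_min hdt hmint
  set k := α / t with hk
  have hkpos : 0 < k := div_pos hα ht
  have hky : α * ux y t / t = k * ux y t := by rw [hk]; ring
  have hkx : α * ux x t / t = k * ux x t := by rw [hk]; ring
  have hEk : 0 < E * k := mul_pos hEpos hkpos
  rw [hky] at hcy hsy
  rw [hkx] at hcx hsx
  have hpeq : ux x t = ux y t := by
    apply mul_left_cancel₀ hEk.ne'
    linarith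
  have heqx' := heqx hpeq
  rw [hpeq] at hcx hsx haxp
  set p := ux y t with hp
  have hEkp : E * k * p = 1 := by linarith
  have hPp : P ≤ p := by
    apply le_of_mul_le_mul_left _ hEk
    linarith
  have hpp : 0 < p := by
    by_contra! h
    nlinarith
  have hyy : E * uxxy ≤ -p := by
    have h : k * (E * uxxy + p) ≤ 0 := by
      have : α * uxxy / t = k * uxxy := by rw [hk]; ring
      rw [this] at hsy
      have h2 : E * (k * p) * (k * p) = k * p := by linear_combination (k * p) * hEkp
      linarith
    nlinarith
  have hxx : p ≤ E * uxxx := by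
    have h : 0 ≤ k * (E * uxxx - p) := by
      have : α * uxxx / t = k * uxxx := by rw [hk]; ring
      rw [this] at hsx
      have h2 : E * (k * p) * (k * p) = k * p := by linear_combination (k * p) * hEkp
      linarith
    nlinarith
  have hdiff : E * (uty - utx) * p ≤ -(2 * A) := by
    have h1 := mul_le_mul_of_nonneg_left hyy hay.le
    have h2 := mul_le_mul_of_nonneg_left hxx hax.le
    have h3 : E * (uty - utx) ≤ -(ay * p) - ax * p := by
      rw [heqy, heqx']
      linarith
    have h4 := mul_le_mul_of_nonneg_right h3 hpp.le
    have h5 := hayp hPp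
    have h6 := haxp hPp
    linarith
  have hE0 : 0 < Real.exp (-β / t) * (β / t ^ 2) := by positivity
  have htime : 0 < E * (α * (uty - utx) * t - (α * (u y t - u x t) - β)) := by
    have h : 0 < E * ((α * (uty - utx) * t - (α * (u y t - u x t) - β)) / t ^ 2) := by linarith
    rw [← mul_div_assoc] at h
    exact (div_pos_iff_of_pos_right (by positivity)).1 h
  have hbr : α * (u y t - u x t) - β < α * (uty - utx) * t := by
    have := (mul_pos_iff_of_pos_left hEpos).1 htime
    linarith
  have hut : uty - utx ≤ -(2 * A) * k := by
    have h := mul_le_mul_of_nonneg_right hdiff hkpos.le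
    have h' : E * (uty - utx) * p * k = uty - utx := by
      linear_combination (uty - utx) * hEkp
    linarith
  have hfin : α * (uty - utx) * t ≤ -(2 * A) * α ^ 2 := by
    have h := mul_le_mul_of_nonneg_left hut (mul_pos hα ht).le
    have hkt : k * t = α := div_mul_cancel₀ α ht.ne'
    have : α * t * (-(2 * A) * k) = -(2 * A) * α ^ 2 := by
      linear_combination (-(2 * A) * α) * hkt
    linarith
  have := mul_pos hα hz
  linarith

/-- Smallness of the slope of the barrier for short times. -/
lemma barrier_slope_le {α M P t : ℝ} (hα : 0 < α) (hM : 0 < M) (hP : 0 < P) (ht : 0 < t)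
    (htT : t ≤ α * M ^ 2 / (2 * P)) : Real.exp (-(α * M) / t) * (α / t) * P ≤ 1 := by
  have hq := Real.quadratic_le_exp_of_nonneg (x := α * M / t) (by positivity)
  have hpos : 0 < α * M / t := by positivity
  rw [neg_div, Real.exp_neg, mul_assoc, inv_mul_le_iff₀ (Real.exp_pos _), mul_one]
  rw [le_div_iff₀ (by positivity)] at htT
  have : α / t * P ≤ (α * M / t) ^ 2 / 2 := by
    have h : (α * M / t) ^ 2 / 2 - α / t * P
        = α / (2 * t ^ 2) * (α * M ^ 2 - t * (2 * P)) := by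
      field_simp
    have : 0 ≤ α / (2 * t ^ 2) * (α * M ^ 2 - t * (2 * P)) :=
      mul_nonneg (by positivity) (by linarith)
    linarith
  linarith

/-- The two-point function stays nonnegative for short times. -/
lemma twoPoint_nonneg {M A P α β T L : ℝ} (hM : 0 < M) (hP : 0 < P) (hα : 0 < α)
    (hβ : β = 2 * (α * M)) (hαβ : β ≤ 2 * A * α ^ 2) (hL : 0 < L)
    {a : ℝ → ℝ → ℝ → ℝ → ℝ} {b : ℝ → ℝ} {u ut ux uxx : ℝ → ℝ → ℝ}
    (ha : ∀ p q x : ℝ, ∀ t ∈ Set.Icc (0:ℝ) T, 0 < a p q x t)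
    (haA : ∀ p q x : ℝ, ∀ t ∈ Set.Icc (0:ℝ) T, P ≤ |p| → A ≤ a p q x t * p ^ 2)
    (hu : ContinuousOn (fun z : ℝ × ℝ => u z.1 z.2) (Set.univ ×ˢ Set.Ico 0 T))
    (hut : ∀ x : ℝ, ∀ t ∈ Set.Ioo (0:ℝ) T, HasDerivAt (fun s => u x s) (ut x t) t)
    (hux : ∀ x : ℝ, ∀ t ∈ Set.Ioo (0:ℝ) T, HasDerivAt (fun y => u y t) (ux x t) x)
    (huxx : ∀ x : ℝ, ∀ t ∈ Set.Ioo (0:ℝ) T, HasDerivAt (fun y => ux y t) (uxx x t) x)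
    (heq : ∀ x : ℝ, ∀ t ∈ Set.Ioo (0:ℝ) T,
      ut x t = a (ux x t) (u x t) x t * uxx x t + b (ux x t))
    (hper : ∀ x t : ℝ, u (x + L) t = u x t)
    (hosc : ∀ t ∈ Set.Ico (0:ℝ) T, ∀ x y : ℝ, u x t - u y t ≤ M)
    {t₀ : ℝ} (ht₀ : t₀ ∈ Set.Ioo 0 T) (htT : t₀ ≤ α * M ^ 2 / (2 * P))
    {x₀ y₀ : ℝ} (hxy : x₀ ≤ y₀) : 0 ≤ twoPoint α β u x₀ y₀ t₀ := by
  by_contra! hneg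
  have hαM : 0 < α * M := mul_pos hα hM
  have hexp : ∀ t ∈ Set.Ioo (0:ℝ) T, ∀ x y,
      Real.exp ((α * (u y t - u x t) - β) / t) ≤ Real.exp (-(α * M) / t) := by
    intro t ht x y
    apply Real.exp_le_exp.2
    apply div_le_div_of_nonneg_right _ ht.1.le
    have := mul_le_mul_of_nonneg_left (hosc t ⟨ht.1.le, ht.2⟩ y x) hα.le
    linarith
  have hlower : ∀ t ∈ Set.Ioo (0:ℝ) T, ∀ x y,
      y - x - Real.exp (-(α * M) / t) < twoPoint α β u x y t := by
    intro t ht x y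
    have h1 := hexp t ht x y
    have h2 := Real.exp_pos (-β / t)
    unfold twoPoint
    linarith
  have hlt1 : ∀ t : ℝ, 0 < t → Real.exp (-(α * M) / t) < 1 := by
    intro t ht
    rw [← Real.exp_zero, Real.exp_lt_exp]
    exact div_neg_of_neg_of_pos (by linarith) ht
  have hshift : ∀ (n : ℤ) (x t : ℝ), u (x + n * L) t = u x t := by
    intro n x t
    have h : Function.Periodic (fun x => u x t) L := fun x => hper x t
    simpa using h.int_mul n x
  have hWshift : ∀ (n : ℤ) (x y t : ℝ),
      twoPoint α β u (x + n * L) (y + n * L) t = twoPoint α β u x y t := by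
    intro n x y t
    unfold twoPoint
    rw [hshift, hshift]
    ring
  -- for small times the two-point function exceeds its value at `(x₀, y₀, t₀)`
  obtain ⟨d, hd, hdt, hdsmall⟩ : ∃ d, 0 < d ∧ d < t₀ ∧
      Real.exp (-(α * M) / d) ≤ -twoPoint α β u x₀ y₀ t₀ := by
    set η := -twoPoint α β u x₀ y₀ t₀ with hη
    have hηpos : 0 < η := by linarith
    refine ⟨min (t₀ / 2) (α * M * η), ?_, ?_, ?_⟩
    · have := ht₀.1
      positivity
    · exact (min_le_left _ _).trans_lt (half_lt_self ht₀.1)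
    · set d := min (t₀ / 2) (α * M * η)
      have hdpos : 0 < d := by
        have := ht₀.1
        positivity
      have hdle : d ≤ α * M * η := min_le_right _ _
      have h1 : 1 / η ≤ α * M / d := by
        rw [div_le_div_iff₀ hηpos hdpos]
        linarith
      have h2 := Real.add_one_le_exp (α * M / d)
      rw [neg_div, Real.exp_neg]
      apply inv_le_of_inv_le₀ hηpos
      rw [← one_div]
      linarith
  let K : Set (ℝ × ℝ × ℝ) := Set.Icc 0 L ×ˢ Set.Icc 0 1 ×ˢ Set.Icc d t₀
  have hK : IsCompact K := isCompact_Icc.prod (isCompact_Icc.prod isCompact_Icc)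
  let F : ℝ × ℝ × ℝ → ℝ := fun z => twoPoint α β u z.1 (z.1 + z.2.1) z.2.2
  have hF : ContinuousOn F K := by
    have hmaps : ∀ z ∈ K, z.2.2 ∈ Set.Ico 0 T ∧ z.2.2 ≠ 0 := fun z hz =>
      ⟨⟨hd.le.trans hz.2.2.1, hz.2.2.2.trans_lt ht₀.2⟩, (hd.trans_le hz.2.2.1).ne'⟩
    have h1 : ContinuousOn (fun z : ℝ × ℝ × ℝ => u z.1 z.2.2) K :=
      hu.comp (f := fun z : ℝ × ℝ × ℝ => (z.1, z.2.2)) (by fun_prop)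
        fun z hz => ⟨trivial, (hmaps z hz).1⟩
    have h2 : ContinuousOn (fun z : ℝ × ℝ × ℝ => u (z.1 + z.2.1) z.2.2) K :=
      hu.comp (f := fun z : ℝ × ℝ × ℝ => (z.1 + z.2.1, z.2.2)) (by fun_prop)
        fun z hz => ⟨trivial, (hmaps z hz).1⟩
    have h3 : ContinuousOn (fun z : ℝ × ℝ × ℝ =>
        Real.exp ((α * (u (z.1 + z.2.1) z.2.2 - u z.1 z.2.2) - β) / z.2.2)) K :=
      ((((h2.sub h1).const_smul α).sub continuousOn_const).div
        (by fun_prop) fun z hz => (hmaps z hz).2).rexp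
    have h4 : ContinuousOn (fun z : ℝ × ℝ × ℝ => Real.exp (-β / z.2.2)) K :=
      (continuousOn_const.div (by fun_prop) fun z hz => (hmaps z hz).2).rexp
    have h5 : ContinuousOn (fun z : ℝ × ℝ × ℝ => z.1 + z.2.1 - z.1) K := by fun_prop
    exact h5.sub (h3.sub h4)
  obtain ⟨⟨x, r, t⟩, hzK, hzmin⟩ := hK.exists_isMinOn
    ⟨(0, 0, t₀), ⟨le_rfl, hL.le⟩, ⟨le_rfl, zero_le_one⟩, hdt.le, le_rfl⟩ hF
  -- the minimum over the compact set is global by periodicity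
  have hglob : ∀ x' y' s, s ∈ Set.Icc d t₀ → x' ≤ y' → y' - x' ≤ 1 →
      twoPoint α β u x (x + r) t ≤ twoPoint α β u x' y' s := by
    intro x' y' s hs hle h1
    set n : ℤ := -⌊x' / L⌋ with hn
    have hx'0 : 0 ≤ x' + n * L := by
      have := (le_div_iff₀ hL).1 (Int.floor_le (x' / L))
      push_cast [hn]
      linarith
    have hx'L : x' + n * L ≤ L := by
      have := (div_lt_iff₀ hL).1 (Int.lt_floor_add_one (x' / L))
      push_cast [hn]
      linarith
    have h := isMinOn_iff.1 hzmin (x' + n * L, y' - x', s)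
      ⟨⟨hx'0, hx'L⟩, ⟨by simpa using hle, h1⟩, hs⟩
    have h' : x' + n * L + (y' - x') = y' + n * L := by ring
    simp only [F, h', hWshift] at h
    exact h
  have hval : twoPoint α β u x (x + r) t ≤ twoPoint α β u x₀ y₀ t₀ := by
    apply hglob _ _ _ ⟨hdt.le, le_rfl⟩ hxy
    have := hlower t₀ ht₀ x₀ y₀
    have := hlt1 t₀ ht₀.1
    linarith
  obtain ⟨-, ⟨hr0, hr1⟩, hdt', htt₀⟩ := hzK
  simp only at hr0 hr1 hdt' htt₀
  have ht0 : 0 < t := hd.trans_le hdt'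
  have htIoo : t ∈ Set.Ioo 0 T := ⟨ht0, htt₀.trans_lt ht₀.2⟩
  have hlow := hlower t htIoo x (x + r)
  have hr1' : r < 1 := by
    have := hlt1 t ht0
    linarith
  have hr0' : 0 < r := by
    refine lt_of_le_of_ne hr0 fun h => ?_
    rw [← h] at hval
    simp [twoPoint] at hval hneg
    linarith
  have hdlt : d < t := by
    refine lt_of_le_of_ne hdt' fun h => ?_
    rw [← h] at hlow hval
    linarith
  have hz : 0 < u (x + r) t - u x t := by
    have h : Real.exp (-β / t) < Real.exp ((α * (u (x + r) t - u x t) - β) / t) := by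
      have h' := hval.trans_lt hneg
      unfold twoPoint at h'
      linarith
    rw [Real.exp_lt_exp, div_lt_div_iff_of_pos_right ht0] at h
    exact (mul_pos_iff_of_pos_left hα).1 (by linarith)
  have htIcc : t ∈ Set.Icc 0 T := ⟨ht0.le, htIoo.2.le⟩
  refine twoPoint_no_interior_min (A := A) (P := P) (c := b (ux (x + r) t)) hα
    (by linarith) hαβ hd hdlt hz ?_
    (hut _ t htIoo) (hut _ t htIoo) (fun w => hux w t htIoo) (huxx _ t htIoo) (huxx _ t htIoo)
    (ha (ux (x + r) t) (u (x + r) t) (x + r) t htIcc) (ha (ux x t) (u x t) x t htIcc)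
    (fun h => haA _ _ _ t htIcc (h.trans (le_abs_self _)))
    (fun h => haA _ _ _ t htIcc (h.trans (le_abs_self _)))
    (heq _ t htIoo) (fun h => ?_) ?_ ?_ ?_
  · refine le_trans ?_ (barrier_slope_le hα hM hP ht0 (htt₀.trans htT))
    have := hexp t htIoo x (x + r)
    gcongr
  · rw [heq _ t htIoo, h]
  · filter_upwards [Ioo_mem_nhds (show x < x + r by linarith) (show x + r < x + 1 by linarith)]
      with w hw
    exact hglob _ _ _ ⟨hdt', htt₀⟩ hw.1.le (by linarith [hw.2])
  · filter_upwards [Ioo_mem_nhds (show x + r - 1 < x by linarith) (show x < x + r by linarith)]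
      with w hw
    exact hglob _ _ _ ⟨hdt', htt₀⟩ hw.2.le (by linarith [hw.1])
  · intro s hs
    exact hglob _ _ _ ⟨hs.1, hs.2.trans htt₀⟩ (by linarith) (by linarith)

/-- Nonnegativity of the two-point function bounds the slope from above. -/
lemma slope_le_of_twoPoint_nonneg {α β t x p : ℝ} {u : ℝ → ℝ → ℝ} (hα : 0 < α) (ht : 0 < t)
    (hux : HasDerivAt (fun y => u y t) p x)
    (hW : ∀ y, x ≤ y → 0 ≤ twoPoint α β u x y t) : p ≤ t / α * Real.exp (β / t) := by
  have hw := (hasDerivWithinAt_iff_tendsto_slope' (s := Set.Ioi x) (by simp)).1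
    hux.hasDerivWithinAt
  refine le_of_tendsto hw ?_
  filter_upwards [self_mem_nhdsWithin] with y hy
  have hxy : 0 < y - x := sub_pos.2 hy
  rw [slope_def_field, div_le_iff₀ hxy]
  have h := hW y (le_of_lt hy)
  unfold twoPoint at h
  have hsplit : Real.exp ((α * (u y t - u x t) - β) / t)
      = Real.exp (-β / t) * Real.exp (α * (u y t - u x t) / t) := by
    rw [← Real.exp_add]
    congr 1
    ring
  have hone := Real.add_one_le_exp (α * (u y t - u x t) / t)
  have hlin : Real.exp (-β / t) * (α * (u y t - u x t) / t) ≤ y - x := by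
    have := mul_le_mul_of_nonneg_left hone (Real.exp_pos (-β / t)).le
    linarith
  have hinv : Real.exp (β / t) * Real.exp (-β / t) = 1 := by
    rw [← Real.exp_add, neg_div, add_neg_cancel, Real.exp_zero]
  have h2 := mul_le_mul_of_nonneg_left hlin
    (mul_pos (div_pos ht hα) (Real.exp_pos (β / t))).le
  have h3 : t / α * Real.exp (β / t) * (Real.exp (-β / t) * (α * (u y t - u x t) / t))
      = u y t - u x t := by
    have h4 : t / α * (α * (u y t - u x t) / t) = u y t - u x t := by field_simp
    linear_combination (t / α * (α * (u y t - u x t) / t)) * hinv + h4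
  linarith

/-- Explicit short-time gradient estimate, independent of the
initial gradient, for periodic solutions of `u_t = a(u_x,u,x,t) u_{xx} + b(u_x)`
under the degeneracy control `a p² ≥ A` for `|p| ≥ P`. -/
theorem periodic_gradient_estimate_one_dim :
    ∀ M A P : ℝ, 0 < M → 0 < A → 0 < P →
    ∃ T' C₁ C₂ : ℝ, 0 < T' ∧ 0 < C₁ ∧ 0 < C₂ ∧
      ∀ (T L : ℝ), 0 < T → 0 < L →
      ∀ (a : ℝ → ℝ → ℝ → ℝ → ℝ) (b : ℝ → ℝ) (u ut ux uxx : ℝ → ℝ → ℝ),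
      ContinuousOn (fun z : ℝ × ℝ × ℝ × ℝ => a z.1 z.2.1 z.2.2.1 z.2.2.2)
        (Set.univ ×ˢ Set.univ ×ˢ Set.univ ×ˢ Set.Icc 0 T) →
      (∀ p q x : ℝ, ∀ t ∈ Set.Icc (0:ℝ) T, 0 < a p q x t) →
      (∀ p q x t : ℝ, a p q (x + L) t = a p q x t) →
      (∀ p q x : ℝ, ∀ t ∈ Set.Icc (0:ℝ) T, P ≤ |p| → A ≤ a p q x t * p ^ 2) →
      Continuous b →
      ContinuousOn (fun z : ℝ × ℝ => u z.1 z.2) (Set.univ ×ˢ Set.Ico 0 T) →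
      (∀ x : ℝ, ∀ t ∈ Set.Ioo (0:ℝ) T, HasDerivAt (fun s => u x s) (ut x t) t) →
      (∀ x : ℝ, ∀ t ∈ Set.Ioo (0:ℝ) T, HasDerivAt (fun y => u y t) (ux x t) x) →
      (∀ x : ℝ, ∀ t ∈ Set.Ioo (0:ℝ) T, HasDerivAt (fun y => ux y t) (uxx x t) x) →
      ContinuousOn (fun z : ℝ × ℝ => ut z.1 z.2) (Set.univ ×ˢ Set.Ioo 0 T) →
      ContinuousOn (fun z : ℝ × ℝ => ux z.1 z.2) (Set.univ ×ˢ Set.Ioo 0 T) →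
      ContinuousOn (fun z : ℝ × ℝ => uxx z.1 z.2) (Set.univ ×ˢ Set.Ioo 0 T) →
      (∀ x : ℝ, ∀ t ∈ Set.Ioo (0:ℝ) T,
        ut x t = a (ux x t) (u x t) x t * uxx x t + b (ux x t)) →
      (∀ x t : ℝ, u (x + L) t = u x t) →
      (∀ t ∈ Set.Ico (0:ℝ) T, ∀ x y : ℝ, u x t - u y t ≤ M) →
      ∀ x : ℝ, ∀ t ∈ Set.Ioo (0:ℝ) (min T T'),
        |ux x t| ≤ C₁ * Real.sqrt t * (1 + t) * Real.exp (C₂ / t) := by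
  intro M A P hM hA hP
  have hα : 0 < 2 * M / A := by positivity
  refine ⟨2 * M / A * M ^ 2 / (2 * P), 1 / (2 * M / A), 2 * (2 * M / A * M), by positivity,
    by positivity, by positivity, ?_⟩
  intro T L _ hL a b u ut ux uxx _ ha _ haA _ hu hut hux huxx _ _ _ heq hper hosc x t ht
  set α := 2 * M / A with hαdef
  have hαβ : 2 * (α * M) ≤ 2 * A * α ^ 2 := by
    have h : A * α = 2 * M := by rw [hαdef]; field_simp
    have : A * α ^ 2 = 2 * (α * M) := by linear_combination α * h
    have := mul_pos hα hM
    linarith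
  have htT : t ∈ Set.Ioo 0 T := ⟨ht.1, ht.2.trans_le (min_le_left _ _)⟩
  have htT' : t ≤ α * M ^ 2 / (2 * P) := (ht.2.trans_le (min_le_right _ _)).le
  have hupper : ux x t ≤ t / α * Real.exp (2 * (α * M) / t) :=
    slope_le_of_twoPoint_nonneg hα ht.1 (hux x t htT) fun y hy =>
      twoPoint_nonneg hM hP hα rfl hαβ hL ha haA hu hut hux huxx heq hper hosc htT htT' hy
  have hlower : -ux x t ≤ t / α * Real.exp (2 * (α * M) / t) := by
    refine slope_le_of_twoPoint_nonneg (u := fun x t => -u x t) hα ht.1 (hux x t htT).neg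
      fun y hy => ?_
    refine twoPoint_nonneg (a := fun p q x t => a (-p) (-q) x t) (b := fun p => -b (-p))
      (u := fun x t => -u x t) (ut := fun x t => -ut x t) (ux := fun x t => -ux x t)
      (uxx := fun x t => -uxx x t) hM hP hα rfl hαβ hL (fun p q x t ht => ha _ _ _ t ht) (fun p q x t ht hp => ?_) hu.neg
      (fun x t ht => (hut x t ht).neg) (fun x t ht => (hux x t ht).neg)
      (fun x t ht => (huxx x t ht).neg) (fun x t ht => ?_) (fun x t => ?_)
      (fun t ht x y => ?_) htT htT' hy
    · have := haA (-p) (-q) x t ht (by rwa [abs_neg])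
      rwa [neg_sq] at this
    · simp only [neg_neg]
      rw [heq x t ht]
      ring
    · rw [hper]
    · have := hosc t ht y x
      linarith
  refine (abs_le'.2 ⟨hupper, hlower⟩).trans ?_
  have hsqrt : t ≤ Real.sqrt t * (1 + t) := by
    have h1 := Real.mul_self_sqrt ht.1.le
    have h2 := Real.sqrt_nonneg t
    have h3 : Real.sqrt t ≤ 1 + t := by nlinarith [sq_nonneg (Real.sqrt t - 1)]
    nlinarith
  have h := mul_le_mul_of_nonneg_left hsqrt
    (mul_pos (one_div_pos.2 hα) (Real.exp_pos (2 * (α * M) / t))).le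
  calc t / α * Real.exp (2 * (α * M) / t)
      = 1 / α * Real.exp (2 * (α * M) / t) * t := by ring
    _ ≤ _ := h
    _ = _ := by ring
end

section
/- For all M, A, P, d > 0 there exist T', C₁, C₂ > 0, depending only on M, A, P and d, with the following property. Let Ω ⊆ ℝ be an open interval, T > 0, let a : ℝ × ℝ × Ω × [0,T] → ℝ be continuous and positive with a(p,q,x,t)·p² ≥ A whenever |p| ≥ P, and let u : Ω × [0,T] → ℝ have continuous partial derivatives u_t, u_x, u_{xx} on Ω × (0,T] and satisfy u_t = a(u_x,u,x,t)·u_{xx} there, with oscillation of u over Ω × [0,T] at most M. Then for every x ∈ Ω whose distance to the complement of Ω is at least d, and every t ∈ (0, min(T,T')]: |u_x(x,t)| ≤ C₁·√t·(1+t)·exp(C₂/t). -/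
open Set Filter Topology

/-- A function that is maximal at the right end of an interval has nonnegative derivative there. -/
theorem HasDerivWithinAt.nonneg_of_forall_le_right_endpoint {f : ℝ → ℝ} {c s t : ℝ} (hst : s < t)
    (hf : HasDerivWithinAt f c (Icc s t) t) (hmax : ∀ x ∈ Icc s t, f x ≤ f t) : 0 ≤ c := by
  have h := (hasDerivWithinAt_iff_tendsto_slope' (by simp)).1
    (hf.mono (Ioo_subset_Icc_self : Ioo s t ⊆ Icc s t))
  have := right_nhdsWithin_Ioo_neBot hst
  refine ge_of_tendsto h ?_
  filter_upwards [self_mem_nhdsWithin] with x hx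
  rw [slope_def_field]
  exact div_nonneg_of_nonpos (by linarith [hmax x ⟨hx.1.le, hx.2.le⟩]) (by linarith [hx.2])

/-- A function that is minimal at the left end of an interval has nonnegative derivative there. -/
theorem HasDerivWithinAt.nonneg_of_forall_left_endpoint_le {f : ℝ → ℝ} {c s t : ℝ} (hst : s < t)
    (hf : HasDerivWithinAt f c (Icc s t) s) (hmin : ∀ x ∈ Icc s t, f s ≤ f x) : 0 ≤ c := by
  have h := (hasDerivWithinAt_iff_tendsto_slope' (by simp)).1
    (hf.mono (Ioo_subset_Icc_self : Ioo s t ⊆ Icc s t))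
  have := left_nhdsWithin_Ioo_neBot hst
  refine ge_of_tendsto h ?_
  filter_upwards [self_mem_nhdsWithin] with x hx
  rw [slope_def_field]
  exact div_nonneg (by linarith [hmin x ⟨hx.1.le, hx.2.le⟩]) (by linarith [hx.1])

/-- The second derivative at a local maximum is nonpositive. -/
theorem IsLocalMax.hasDerivAt_hasDerivAt_nonpos {f f' : ℝ → ℝ} {c z : ℝ} (hmax : IsLocalMax f z)
    (hf : ∀ᶠ y in 𝓝 z, HasDerivAt f (f' y) y) (hf' : HasDerivAt f' c z) : c ≤ 0 := by
  by_contra! hc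
  have hz : f' z = 0 := hmax.hasDerivAt_eq_zero hf.self_of_nhds
  have hpos : ∀ᶠ y in 𝓝[>] z, 0 < f' y := by
    have h := (hasDerivWithinAt_iff_tendsto_slope' (by simp)).1
      (hf'.hasDerivWithinAt (s := Ioi z))
    filter_upwards [h.eventually (lt_mem_nhds hc), self_mem_nhdsWithin] with y hy hzy
    rw [slope_def_field, hz, sub_zero] at hy
    have hzy' : 0 < y - z := sub_pos.2 hzy
    exact (div_pos_iff_of_pos_right hzy').1 hy
  have hall : ∀ᶠ y in 𝓝[>] z, 0 < f' y ∧ HasDerivAt f (f' y) y ∧ f y ≤ f z :=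
    hpos.and ((hf.filter_mono nhdsWithin_le_nhds).and (hmax.filter_mono nhdsWithin_le_nhds))
  obtain ⟨w, hzw, hw⟩ := mem_nhdsGT_iff_exists_Ioc_subset.1 hall
  have hzw : z < w := hzw
  obtain ⟨y, hy, hyw⟩ := exists_hasDerivAt_eq_slope f f' hzw
    (fun y hy => by
      rcases eq_or_lt_of_le hy.1 with rfl | h
      · exact hf.self_of_nhds.continuousAt.continuousWithinAt
      · exact (hw ⟨h, hy.2⟩).2.1.continuousAt.continuousWithinAt)
    (fun y hy => (hw ⟨hy.1, hy.2.le⟩).2.1)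
  have h1 := (hw ⟨hy.1, hy.2.le⟩).1
  have h2 := (hw ⟨hzw, le_rfl⟩).2.2
  rw [hyw] at h1
  have := (div_pos_iff_of_pos_right (sub_pos.2 hzw)).1 h1
  linarith

/-- First and second order conditions at a local maximum of `exp ((k v + β) / τ)` minus a quadratic
polynomial. -/
theorem exp_sub_quadratic_isLocalMax_conditions {v v' : ℝ → ℝ} {v'' k β τ σ κ x₀ z : ℝ}
    (hv : ∀ᶠ y in 𝓝 z, HasDerivAt v (v' y) y) (hv' : HasDerivAt v' v'' z)
    (hmax : IsLocalMax
      (fun y => Real.exp ((k * v y + β) / τ) - (σ * y + κ * (y - x₀) ^ 2)) z) :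
    k / τ * Real.exp ((k * v z + β) / τ) * v' z = σ + 2 * κ * (z - x₀) ∧
      k / τ * Real.exp ((k * v z + β) / τ) * v'' +
        (k / τ) ^ 2 * Real.exp ((k * v z + β) / τ) * v' z ^ 2 ≤ 2 * κ := by
  have hexp : ∀ y, HasDerivAt v (v' y) y → HasDerivAt (fun y => Real.exp ((k * v y + β) / τ))
      (k / τ * Real.exp ((k * v y + β) / τ) * v' y) y := fun y hy => by
    convert (((hy.const_mul k).add_const β).div_const τ).exp using 1
    ring
  have hquad : ∀ y, HasDerivAt (fun y : ℝ => σ * y + κ * (y - x₀) ^ 2)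
      (σ + 2 * κ * (y - x₀)) y := fun y => by
    refine (((hasDerivAt_id y).const_mul σ).add
      ((((hasDerivAt_id y).sub_const x₀).pow 2).const_mul κ)).congr_deriv ?_
    simp
    ring
  have hf : ∀ᶠ y in 𝓝 z, HasDerivAt
      (fun y => Real.exp ((k * v y + β) / τ) - (σ * y + κ * (y - x₀) ^ 2))
      (k / τ * Real.exp ((k * v y + β) / τ) * v' y - (σ + 2 * κ * (y - x₀))) y :=
    hv.mono fun y hy => (hexp y hy).sub (hquad y)
  have hquad' : HasDerivAt (fun y : ℝ => σ + 2 * κ * (y - x₀)) (2 * κ) z := by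
    simpa using (((hasDerivAt_id z).sub_const x₀).const_mul (2 * κ)).const_add σ
  have h1 := hmax.hasDerivAt_eq_zero hf.self_of_nhds
  have h2 := hmax.hasDerivAt_hasDerivAt_nonpos hf
    ((((hexp z hv.self_of_nhds).const_mul (k / τ)).mul hv').sub hquad')
  exact ⟨by linarith, by linarith⟩

/-- The diffusion term at a touching point is dominated by the convexity of the barrier. -/
theorem diffusion_term_le {A P κ E s G p q b : ℝ} (hE : 0 < E) (hs : 0 < s)
    (hb : 0 < b) (hG : 1 / 2 ≤ |G|) (hgrad : s * E * p = G)
    (hhess : s * E * q + s ^ 2 * E * p ^ 2 ≤ 2 * κ) (hsE : s * E * (2 * P) ≤ 1)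
    (hκE : 16 * κ * E ≤ 1) (hbA : P ≤ |p| → A ≤ b * p ^ 2) :
    b * (s * E * q) ≤ -(A / 2 * (s ^ 2 * E)) := by
  have hsE0 : 0 < s * E := mul_pos hs hE
  have habs : s * E * |p| = |G| := by rw [← hgrad, abs_mul, abs_of_pos hsE0]
  have hp : P ≤ |p| := by
    by_contra! h
    nlinarith [mul_lt_mul_of_pos_left h hsE0]
  have hGsq : 1 / 4 ≤ G ^ 2 := by rw [← sq_abs]; nlinarith
  have hsq : 4 * κ ≤ s ^ 2 * E * p ^ 2 := by
    have : E * (4 * κ) ≤ E * (s ^ 2 * E * p ^ 2) := by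
      have : E * (s ^ 2 * E * p ^ 2) = G ^ 2 := by rw [← hgrad]; ring
      linarith
    exact le_of_mul_le_mul_left this hE
  have hq : s * E * q ≤ -(s ^ 2 * E * p ^ 2 / 2) := by linarith
  have h1 := mul_le_mul_of_nonneg_left hq hb.le
  have h2 := mul_le_mul_of_nonneg_left (hbA hp) (by positivity : 0 ≤ s ^ 2 * E / 2)
  linarith

/-- `exp (-n / τ)` beats `1 / τ` as `τ → 0`. -/
theorem exists_forall_one_add_div_mul_exp_le {k n δ : ℝ} (hk : 0 < k) (hn : 0 < n) (hδ : 0 < δ) :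
    ∃ τ₀ > 0, ∀ τ, 0 < τ → τ ≤ τ₀ → (1 + k / τ) * Real.exp (-n / τ) ≤ δ := by
  refine ⟨min 1 (δ * n ^ 2 / (2 * (1 + k))), by positivity, fun τ hτ hle => ?_⟩
  have h1 : τ ≤ 1 := hle.trans (min_le_left _ _)
  have h2 : τ * (2 * (1 + k)) ≤ δ * n ^ 2 :=
    (le_div_iff₀ (by positivity)).1 (hle.trans (min_le_right _ _))
  have hexp : (n / τ) ^ 2 / 2 ≤ Real.exp (n / τ) := by
    have := Real.quadratic_le_exp_of_nonneg (div_pos hn hτ).le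
    have := div_pos hn hτ
    linarith
  rw [neg_div, Real.exp_neg, ← div_eq_mul_inv, div_le_iff₀ (Real.exp_pos _)]
  refine le_trans ?_ (mul_le_mul_of_nonneg_left hexp hδ.le)
  have e1 : 1 + k / τ = (τ + k) * τ / τ ^ 2 := by field_simp
  have e2 : δ * ((n / τ) ^ 2 / 2) = (δ * n ^ 2 / 2) / τ ^ 2 := by field_simp
  rw [e1, e2]
  gcongr
  nlinarith

/-- At an interior maximum in space of the two-point function
`exp ((k (u y t - u x t) - m) / (t - ε)) - exp (-m / (t - ε)) - (y - x) - κ ((x - x₀)² + (y - x₀)²)`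
with `u x t ≤ u y t`, the function is strictly decreasing in time, so the point is not maximal
among earlier times. -/
theorem not_isMax_two_point {A P k m κ r x₀ ε s x y t : ℝ} {u ut ux uxx b : ℝ → ℝ → ℝ}
    (hA : 0 < A) (hk : 0 < k) (hm : m = A * k ^ 2) (hκr : 4 * κ * r = 1) (hκ : 0 < κ)
    (hεs : ε < s) (hst : s < t)
    (hut : ∀ z ∈ Icc (x₀ - r) (x₀ + r), HasDerivWithinAt (u z) (ut z t) (Icc s t) t)
    (hux : ∀ z ∈ Icc (x₀ - r) (x₀ + r), HasDerivAt (fun y => u y t) (ux z t) z)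
    (huxx : ∀ z ∈ Icc (x₀ - r) (x₀ + r), HasDerivAt (fun y => ux y t) (uxx z t) z)
    (heq : ∀ z ∈ Icc (x₀ - r) (x₀ + r), ut z t = b z t * uxx z t)
    (hb : ∀ z ∈ Icc (x₀ - r) (x₀ + r), 0 < b z t)
    (hbA : ∀ z ∈ Icc (x₀ - r) (x₀ + r), P ≤ |ux z t| → A ≤ b z t * ux z t ^ 2)
    (hx : x ∈ Ioo (x₀ - r) (x₀ + r)) (hy : y ∈ Ioo (x₀ - r) (x₀ + r))
    (hu : u x t ≤ u y t)
    (hE : Real.exp ((k * (u y t - u x t) - m) / (t - ε)) ≤ r / 4)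
    (hsE : k / (t - ε) * Real.exp ((k * (u y t - u x t) - m) / (t - ε)) * (2 * P) ≤ 1)
    (hmaxy : ∀ᶠ z in 𝓝 y, Real.exp ((k * (u z t - u x t) - m) / (t - ε)) - z - κ * (z - x₀) ^ 2 ≤
      Real.exp ((k * (u y t - u x t) - m) / (t - ε)) - y - κ * (y - x₀) ^ 2)
    (hmaxx : ∀ᶠ z in 𝓝 x, Real.exp ((k * (u y t - u z t) - m) / (t - ε)) + z - κ * (z - x₀) ^ 2 ≤
      Real.exp ((k * (u y t - u x t) - m) / (t - ε)) + x - κ * (x - x₀) ^ 2)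
    (hmaxt : ∀ τ ∈ Icc s t,
      Real.exp ((k * (u y τ - u x τ) - m) / (τ - ε)) - Real.exp (-m / (τ - ε)) ≤
      Real.exp ((k * (u y t - u x t) - m) / (t - ε)) - Real.exp (-m / (t - ε))) : False := by
  have hx' := Ioo_subset_Icc_self hx
  have hy' := Ioo_subset_Icc_self hy
  have hτ : 0 < t - ε := by linarith
  have hEpos := Real.exp_pos ((k * (u y t - u x t) - m) / (t - ε))
  have hκE : 16 * κ * Real.exp ((k * (u y t - u x t) - m) / (t - ε)) ≤ 1 := by
    have := mul_le_mul_of_nonneg_left hE (by positivity : 0 ≤ 16 * κ)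
    linarith
  have hs : 0 < k / (t - ε) := div_pos hk hτ
  have hargy : ∀ z, k * u z t + (-(k * u x t) - m) = k * (u z t - u x t) - m := fun z => by ring
  have hargx : ∀ z, k * (-u z t) + (k * u y t - m) = k * (u y t - u z t) - m := fun z => by ring
  have hnear : ∀ z ∈ Ioo (x₀ - r) (x₀ + r), ∀ᶠ w in 𝓝 z, w ∈ Icc (x₀ - r) (x₀ + r) :=
    fun z hz => Filter.mem_of_superset (isOpen_Ioo.mem_nhds hz) Ioo_subset_Icc_self
  obtain ⟨hy1, hy2⟩ := exp_sub_quadratic_isLocalMax_conditions (v := fun z => u z t)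
    (v' := fun z => ux z t) (k := k) (β := -(k * u x t) - m) (τ := t - ε) (σ := 1) (κ := κ)
    (x₀ := x₀) ((hnear y hy).mono fun z hz => hux z hz) (huxx y hy') (by
      filter_upwards [hmaxy] with z hz
      simp only [hargy]
      linarith)
  obtain ⟨hx1, hx2⟩ := exp_sub_quadratic_isLocalMax_conditions (v := fun z => -u z t)
    (v' := fun z => -ux z t) (k := k) (β := k * u y t - m) (τ := t - ε) (σ := -1) (κ := κ)
    (x₀ := x₀) ((hnear x hx).mono fun z hz => (hux z hz).neg) (huxx x hx').neg (by
      filter_upwards [hmaxx] with z hz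
      simp only [hargx]
      linarith)
  simp only [hargy] at hy1 hy2
  simp only [hargx] at hx1 hx2
  have hGy : 1 / 2 ≤ |1 + 2 * κ * (y - x₀)| := by
    refine le_trans ?_ (le_abs_self _)
    have := mul_lt_mul_of_pos_left hy.1 hκ
    linarith
  have hGx : 1 / 2 ≤ |-1 + 2 * κ * (x - x₀)| := by
    refine le_trans ?_ (neg_le_abs _)
    have := mul_lt_mul_of_pos_left hx.2 hκ
    linarith
  have hdy := diffusion_term_le hEpos hs (hb y hy') hGy hy1 hy2 hsE hκE (hbA y hy')
  have hdx := diffusion_term_le hEpos hs (hb x hx') hGx hx1 hx2 hsE hκE (by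
    simpa using hbA x hx')
  have hid : HasDerivWithinAt (fun τ : ℝ => τ - ε) 1 (Icc s t) t :=
    ((hasDerivAt_id t).sub_const ε).hasDerivWithinAt
  have hdt := HasDerivWithinAt.nonneg_of_forall_le_right_endpoint hst
    (((((((hut y hy').sub (hut x hx')).const_mul k).sub_const m).div hid hτ.ne').exp).sub
      (((hasDerivWithinAt_const t (Icc s t) (-m)).div hid hτ.ne').exp)) hmaxt
  simp only [Pi.sub_apply] at hdt
  rw [heq y hy', heq x hx'] at hdt
  generalize Real.exp ((k * (u y t - u x t) - m) / (t - ε)) = E at *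
  have hF := Real.exp_pos (-m / (t - ε))
  generalize Real.exp (-m / (t - ε)) = F at *
  generalize t - ε = τ at *
  have hw : 0 ≤ u y t - u x t := sub_nonneg.2 hu
  have hmpos : 0 < m := by rw [hm]; positivity
  have hexpand : E * ((k * (b y t * uxx y t - b x t * uxx x t) * τ -
      (k * (u y t - u x t) - m) * 1) / τ ^ 2) - F * ((0 * τ - -m * 1) / τ ^ 2) =
      b y t * (k / τ * E * uxx y t) + b x t * (k / τ * E * -uxx x t)
        - E * (k * (u y t - u x t)) / τ ^ 2 + E * m / τ ^ 2 - F * m / τ ^ 2 := by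
    field_simp
    ring
  rw [hexpand] at hdt
  have h1 : A / 2 * ((k / τ) ^ 2 * E) = E * m / τ ^ 2 / 2 := by rw [hm]; field_simp
  have h2 : 0 < F * m / τ ^ 2 := by positivity
  have h3 : 0 ≤ E * (k * (u y t - u x t)) / τ ^ 2 := by positivity
  linarith

/-- Two-point estimate: a function with bounded gradient solving `u_t = b u_xx`, where
`b u_x² ≥ A` for `|u_x| ≥ P`, has differences controlled through the barrier
`exp ((k w - m) / τ) - exp (-m / τ)`. -/
theorem two_point_estimate {A P M k m n κ r x₀ ε s t₁ L : ℝ} {u ut ux uxx b : ℝ → ℝ → ℝ}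
    (hA : 0 < A) (hP : 0 < P) (hk : 0 < k) (hm : m = A * k ^ 2) (hn : m = k * M + n)
    (hκr : 4 * κ * r = 1) (hκ : 0 < κ) (hεs : ε < s)
    (hut : ∀ z ∈ Icc (x₀ - r) (x₀ + r), ∀ t ∈ Icc s t₁,
      HasDerivWithinAt (u z) (ut z t) (Icc s t₁) t)
    (hux : ∀ z ∈ Icc (x₀ - r) (x₀ + r), ∀ t ∈ Icc s t₁, HasDerivAt (fun y => u y t) (ux z t) z)
    (huxx : ∀ z ∈ Icc (x₀ - r) (x₀ + r), ∀ t ∈ Icc s t₁,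
      HasDerivAt (fun y => ux y t) (uxx z t) z)
    (hL : ∀ z ∈ Icc (x₀ - r) (x₀ + r), ∀ t ∈ Icc s t₁, |ux z t| ≤ L)
    (heq : ∀ z ∈ Icc (x₀ - r) (x₀ + r), ∀ t ∈ Icc s t₁, ut z t = b z t * uxx z t)
    (hb : ∀ z ∈ Icc (x₀ - r) (x₀ + r), ∀ t ∈ Icc s t₁, 0 < b z t)
    (hbA : ∀ z ∈ Icc (x₀ - r) (x₀ + r), ∀ t ∈ Icc s t₁,
      P ≤ |ux z t| → A ≤ b z t * ux z t ^ 2)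
    (hosc : ∀ x ∈ Icc (x₀ - r) (x₀ + r), ∀ y ∈ Icc (x₀ - r) (x₀ + r), ∀ t ∈ Icc s t₁,
      u y t - u x t ≤ M)
    (hE : ∀ t ∈ Icc s t₁, Real.exp (-n / (t - ε)) ≤ r / 4)
    (hsE : ∀ t ∈ Icc s t₁, k / (t - ε) * Real.exp (-n / (t - ε)) * (2 * P) ≤ 1)
    (hinit : k / (s - ε) * Real.exp (-n / (s - ε)) * L ≤ 1)
    {x y t : ℝ} (hx : x₀ - r ≤ x) (hxy : x ≤ y) (hy : y ≤ x₀ + r) (ht : t ∈ Icc s t₁) :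
    Real.exp ((k * (u y t - u x t) - m) / (t - ε)) - Real.exp (-m / (t - ε)) ≤
      y - x + κ * ((x - x₀) ^ 2 + (y - x₀) ^ 2) := by
  have hL0 : 0 ≤ L := (abs_nonneg _).trans (hL x ⟨hx, hxy.trans hy⟩ t ht)
  have hlip : ∀ t ∈ Icc s t₁,
      LipschitzOnWith L.toNNReal (fun z => u z t) (Icc (x₀ - r) (x₀ + r)) := fun t ht =>
    (convex_Icc _ _).lipschitzOnWith_of_nnnorm_hasDerivWithin_le
      (fun z hz => (hux z hz t ht).hasDerivWithinAt) (fun z hz => by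
        rw [← NNReal.coe_le_coe, Real.coe_toNNReal L hL0]
        exact hL z hz t ht)
  have hcont : ContinuousOn (fun z : ℝ × ℝ => u z.1 z.2)
      (Icc (x₀ - r) (x₀ + r) ×ˢ Icc s t₁) :=
    continuousOn_prod_of_continuousOn_lipschitzOnWith _ L.toNNReal
      (fun z hz t ht => (hut z hz t ht).continuousWithinAt) hlip
  set W : ℝ × ℝ × ℝ → ℝ := fun z =>
    Real.exp ((k * (u z.2.1 z.2.2 - u z.1 z.2.2) - m) / (z.2.2 - ε)) -
      Real.exp (-m / (z.2.2 - ε)) -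
      (z.2.1 - z.1 + κ * ((z.1 - x₀) ^ 2 + (z.2.1 - x₀) ^ 2)) with hW
  set K : Set (ℝ × ℝ × ℝ) :=
    (Icc (x₀ - r) (x₀ + r) ×ˢ Icc (x₀ - r) (x₀ + r) ×ˢ Icc s t₁) ∩ {z | z.1 ≤ z.2.1} with hK
  have hKc : IsCompact K := (isCompact_Icc.prod (isCompact_Icc.prod isCompact_Icc)).inter_right
    (isClosed_le (by fun_prop) (by fun_prop))
  have hWc : ContinuousOn W K := by
    have hne : ∀ z ∈ K, z.2.2 - ε ≠ 0 := fun z hz => by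
      have := hz.1.2.2.1
      exact (by linarith : 0 < z.2.2 - ε).ne'
    have h1 : ContinuousOn (fun z : ℝ × ℝ × ℝ => u z.2.1 z.2.2) K :=
      hcont.comp (f := fun z : ℝ × ℝ × ℝ => (z.2.1, z.2.2)) (by fun_prop)
        fun z hz => ⟨hz.1.2.1, hz.1.2.2⟩
    have h2 : ContinuousOn (fun z : ℝ × ℝ × ℝ => u z.1 z.2.2) K :=
      hcont.comp (f := fun z : ℝ × ℝ × ℝ => (z.1, z.2.2)) (by fun_prop)
        fun z hz => ⟨hz.1.1, hz.1.2.2⟩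
    have h3 : ContinuousOn (fun z : ℝ × ℝ × ℝ => z.2.2 - ε) K := by fun_prop
    exact (((((h1.sub h2).const_mul k).sub continuousOn_const).div h3 hne).rexp.sub
      ((continuousOn_const.div h3 hne).rexp)).sub (by fun_prop)
  have hmem : (x, y, t) ∈ K := ⟨⟨⟨hx, hxy.trans hy⟩, ⟨hx.trans hxy, hy⟩, ht⟩, hxy⟩
  obtain ⟨⟨x₁, y₁, τ⟩, hzK, hzmax⟩ := hKc.exists_isMaxOn ⟨_, hmem⟩ hWc
  by_contra! hlt
  have hWpos : 0 < W (x₁, y₁, τ) := by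
    have h : W (x, y, t) ≤ W (x₁, y₁, τ) := hzmax hmem
    refine lt_of_lt_of_le ?_ h
    simp only [hW]
    linarith
  have hx₁ : x₁ ∈ Icc (x₀ - r) (x₀ + r) := hzK.1.1
  have hy₁ : y₁ ∈ Icc (x₀ - r) (x₀ + r) := hzK.1.2.1
  have hτ : τ ∈ Icc s t₁ := hzK.1.2.2
  have hle : x₁ ≤ y₁ := hzK.2
  have hτε : 0 < τ - ε := by linarith [hτ.1]
  have hkτ : 0 < k / (τ - ε) := div_pos hk hτε
  simp only [hW] at hWpos
  have hEle : Real.exp ((k * (u y₁ τ - u x₁ τ) - m) / (τ - ε)) ≤ Real.exp (-n / (τ - ε)) := by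
    have := mul_le_mul_of_nonneg_left (hosc x₁ hx₁ y₁ hy₁ τ hτ) hk.le
    refine Real.exp_le_exp.2 (div_le_div_of_nonneg_right ?_ hτε.le)
    linarith
  have hsq : 0 ≤ κ * (x₁ - x₀) ^ 2 ∧ 0 ≤ κ * (y₁ - x₀) ^ 2 := by constructor <;> positivity
  have hu : u x₁ τ < u y₁ τ := by
    by_contra! h
    have : Real.exp ((k * (u y₁ τ - u x₁ τ) - m) / (τ - ε)) ≤ Real.exp (-m / (τ - ε)) := by
      refine Real.exp_le_exp.2 (div_le_div_of_nonneg_right ?_ hτε.le)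
      have := mul_nonneg hk.le (sub_nonneg.2 h)
      linarith
    linarith
  have hne : x₁ < y₁ := lt_of_le_of_ne hle fun h => by
    rw [h] at hu
    exact lt_irrefl _ hu
  have hF := Real.exp_pos (-m / (τ - ε))
  have hbd := hE τ hτ
  have hx₁' : x₀ - r < x₁ := lt_of_le_of_ne hx₁.1 fun h => by
    have : κ * (x₁ - x₀) ^ 2 = r / 4 := by
      rw [← h]
      linear_combination r / 4 * hκr
    linarith
  have hy₁' : y₁ < x₀ + r := lt_of_le_of_ne hy₁.2 fun h => by
    have : κ * (y₁ - x₀) ^ 2 = r / 4 := by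
      rw [h]
      linear_combination r / 4 * hκr
    linarith
  have hsτ : s < τ := lt_of_le_of_ne hτ.1 fun h => by
    rw [h] at hinit
    have hdist : u y₁ τ - u x₁ τ ≤ L * (y₁ - x₁) := by
      have := (hlip τ hτ).dist_le_mul y₁ hy₁ x₁ hx₁
      rw [Real.dist_eq, Real.dist_eq, Real.coe_toNNReal L hL0, abs_of_pos (sub_pos.2 hne)] at this
      exact (le_abs_self _).trans this
    have hexp : Real.exp ((k * (u y₁ τ - u x₁ τ) - m) / (τ - ε)) - Real.exp (-m / (τ - ε)) ≤
        Real.exp ((k * (u y₁ τ - u x₁ τ) - m) / (τ - ε)) *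
          (k / (τ - ε) * (u y₁ τ - u x₁ τ)) := by
      have h1 := Real.add_one_le_exp (-(k / (τ - ε) * (u y₁ τ - u x₁ τ)))
      have h2 : Real.exp (-m / (τ - ε)) =
          Real.exp ((k * (u y₁ τ - u x₁ τ) - m) / (τ - ε)) *
            Real.exp (-(k / (τ - ε) * (u y₁ τ - u x₁ τ))) := by
        rw [← Real.exp_add]
        congr 1
        ring
      have h3 := mul_le_mul_of_nonneg_left h1
        (Real.exp_pos ((k * (u y₁ τ - u x₁ τ) - m) / (τ - ε))).le
      rw [h2]
      linarith
    have hfin : Real.exp ((k * (u y₁ τ - u x₁ τ) - m) / (τ - ε)) *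
          (k / (τ - ε) * (u y₁ τ - u x₁ τ)) ≤
        Real.exp (-n / (τ - ε)) * (k / (τ - ε) * (L * (y₁ - x₁))) := by
      have := sub_pos.2 hu
      gcongr
    have := mul_le_mul_of_nonneg_right hinit (sub_pos.2 hne).le
    linarith
  have hx₁'' : x₁ ∈ Ioo (x₀ - r) (x₀ + r) := ⟨hx₁', hne.trans hy₁'⟩
  have hy₁'' : y₁ ∈ Ioo (x₀ - r) (x₀ + r) := ⟨hx₁'.trans hne, hy₁'⟩
  have hmax : ∀ x' y' t', (x', y', t') ∈ K → W (x', y', t') ≤ W (x₁, y₁, τ) :=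
    fun x' y' t' h => hzmax h
  simp only [hW] at hmax
  refine not_isMax_two_point (s := s) (x := x₁) (y := y₁) (t := τ) (ε := ε) (u := u) hA hk hm hκr hκ
    hεs hsτ
    (fun z hz => (hut z hz τ hτ).mono (Icc_subset_Icc_right hτ.2)) (fun z hz => hux z hz τ hτ)
    (fun z hz => huxx z hz τ hτ) (fun z hz => heq z hz τ hτ) (fun z hz => hb z hz τ hτ)
    (fun z hz => hbA z hz τ hτ) hx₁'' hy₁'' hu.le (hEle.trans hbd) ?_ ?_ ?_ ?_
  · refine le_trans ?_ (hsE τ hτ)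
    gcongr
  · filter_upwards [isOpen_Ioo.mem_nhds hy₁'', lt_mem_nhds hne] with z hz hxz
    have := hmax x₁ z τ ⟨⟨hx₁, Ioo_subset_Icc_self hz, hτ⟩, hxz.le⟩
    linarith
  · filter_upwards [isOpen_Ioo.mem_nhds hx₁'', gt_mem_nhds hne] with z hz hzy
    have := hmax z y₁ τ ⟨⟨Ioo_subset_Icc_self hz, hy₁, hτ⟩, hzy.le⟩
    linarith
  · intro σ hσ
    have := hmax x₁ y₁ σ ⟨⟨hx₁, hy₁, hσ.1, hσ.2.trans hτ.2⟩, hle⟩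
    linarith

/-- One-sided gradient bound at the final time `t₁` and the centre `x₀`, for a solution of
`u_t = b u_xx` on `[x₀ - r, x₀ + r] × [t₁ / 2, t₁]`. -/
theorem gradient_le_of_two_point_estimate {A P M k m n r x₀ t₁ : ℝ} {u ut ux uxx b : ℝ → ℝ → ℝ}
    (hA : 0 < A) (hP : 0 < P) (hk : 0 < k) (hm : m = A * k ^ 2) (hn : m = k * M + n)
    (hnpos : 0 < n) (hr : 0 < r) (ht₁ : 0 < t₁)
    (hut : ∀ z ∈ Icc (x₀ - r) (x₀ + r), ∀ t ∈ Icc (t₁ / 2) t₁,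
      HasDerivWithinAt (u z) (ut z t) (Icc (t₁ / 2) t₁) t)
    (hux : ∀ z ∈ Icc (x₀ - r) (x₀ + r), ∀ t ∈ Icc (t₁ / 2) t₁,
      HasDerivAt (fun y => u y t) (ux z t) z)
    (huxx : ∀ z ∈ Icc (x₀ - r) (x₀ + r), ∀ t ∈ Icc (t₁ / 2) t₁,
      HasDerivAt (fun y => ux y t) (uxx z t) z)
    (hcont : ContinuousOn (fun z : ℝ × ℝ => ux z.1 z.2)
      (Icc (x₀ - r) (x₀ + r) ×ˢ Icc (t₁ / 2) t₁))
    (heq : ∀ z ∈ Icc (x₀ - r) (x₀ + r), ∀ t ∈ Icc (t₁ / 2) t₁, ut z t = b z t * uxx z t)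
    (hb : ∀ z ∈ Icc (x₀ - r) (x₀ + r), ∀ t ∈ Icc (t₁ / 2) t₁, 0 < b z t)
    (hbA : ∀ z ∈ Icc (x₀ - r) (x₀ + r), ∀ t ∈ Icc (t₁ / 2) t₁,
      P ≤ |ux z t| → A ≤ b z t * ux z t ^ 2)
    (hosc : ∀ x ∈ Icc (x₀ - r) (x₀ + r), ∀ y ∈ Icc (x₀ - r) (x₀ + r), ∀ t ∈ Icc (t₁ / 2) t₁,
      u y t - u x t ≤ M)
    (hE : ∀ τ, 0 < τ → τ ≤ t₁ → Real.exp (-n / τ) ≤ r / 4)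
    (hsE : ∀ τ, 0 < τ → τ ≤ t₁ → k / τ * Real.exp (-n / τ) * (2 * P) ≤ 1) :
    ux x₀ t₁ ≤ t₁ / (2 * k) * Real.exp (2 * m / t₁) := by
  obtain ⟨L, hL⟩ := (isCompact_Icc.prod isCompact_Icc).exists_bound_of_continuousOn hcont
  have hL0 : 0 < max L 1 := lt_max_of_lt_right one_pos
  obtain ⟨τ₀, hτ₀, hsmall⟩ := exists_forall_one_add_div_mul_exp_le hk hnpos (inv_pos.2 hL0)
  set σ := min τ₀ (t₁ / 2) with hσ
  have hσ0 : 0 < σ := lt_min hτ₀ (by linarith)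
  have hσt : σ ≤ t₁ / 2 := min_le_right _ _
  have hsub : Icc (t₁ / 2 + σ) t₁ ⊆ Icc (t₁ / 2) t₁ := Icc_subset_Icc_left (by linarith)
  have hinit : k / (t₁ / 2 + σ - t₁ / 2) * Real.exp (-n / (t₁ / 2 + σ - t₁ / 2)) * max L 1 ≤ 1 := by
    rw [add_sub_cancel_left]
    have h := mul_le_mul_of_nonneg_right (hsmall σ hσ0 (min_le_left _ _)) hL0.le
    rw [inv_mul_cancel₀ hL0.ne'] at h
    have := mul_pos (Real.exp_pos (-n / σ)) hL0
    linarith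
  have hκr : 4 * (1 / (4 * r)) * r = 1 := by field_simp
  have hx₀ : x₀ ∈ Icc (x₀ - r) (x₀ + r) := ⟨by linarith, by linarith⟩
  have htwo : ∀ y ∈ Icc x₀ (x₀ + r), _ := fun y hy =>
    two_point_estimate (x := x₀) (y := y) (t := t₁) (ε := t₁ / 2) hA hP hk hm hn hκr
      (by positivity) (by linarith)
      (fun z hz t ht => (hut z hz t (hsub ht)).mono hsub) (fun z hz t ht => hux z hz t (hsub ht))
      (fun z hz t ht => huxx z hz t (hsub ht))
      (fun z hz t ht => (hL (z, t) ⟨hz, hsub ht⟩).trans (le_max_left _ _))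
      (fun z hz t ht => heq z hz t (hsub ht)) (fun z hz t ht => hb z hz t (hsub ht))
      (fun z hz t ht => hbA z hz t (hsub ht)) (fun x hx y hy t ht => hosc x hx y hy t (hsub ht))
      (fun t ht => hE _ (by linarith [ht.1]) (by linarith [ht.2]))
      (fun t ht => hsE _ (by linarith [ht.1]) (by linarith [ht.2])) hinit
      hx₀.1 hy.1 hy.2 ⟨by linarith, le_rfl⟩
  have hd := ((((hasDerivAt_id x₀).sub_const x₀).add
    ((((hasDerivAt_id x₀).sub_const x₀).pow 2).const_mul (1 / (4 * r)))).sub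
    ((((((hux x₀ hx₀ t₁ ⟨by linarith, le_rfl⟩).sub_const (u x₀ t₁)).const_mul k).sub_const
      m).div_const (t₁ - t₁ / 2)).exp)).hasDerivWithinAt (s := Icc x₀ (x₀ + r))
  have hnonneg := hd.nonneg_of_forall_left_endpoint_le (by linarith) fun y hy => by
    have := htwo y hy
    simp only [id, Pi.sub_apply, Pi.add_apply, sub_self, mul_zero, zero_sub] at this ⊢
    norm_num at this ⊢
    linarith
  have ht2 : t₁ - t₁ / 2 = t₁ / 2 := by ring
  simp only [id, sub_self, mul_zero, zero_sub, ht2] at hnonneg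
  norm_num at hnonneg
  have e1 : -m / (t₁ / 2) = -(2 * m / t₁) := by field_simp
  rw [e1, Real.exp_neg] at hnonneg
  have hX := Real.exp_pos (2 * m / t₁)
  generalize Real.exp (2 * m / t₁) = X at *
  have e2 : X⁻¹ * (k * ux x₀ t₁ / (t₁ / 2)) = ux x₀ t₁ / (t₁ / (2 * k) * X) := by field_simp
  rw [e2, div_le_one (by positivity)] at hnonneg
  exact hnonneg

/-- Interior short-time gradient estimate, independent of the
initial gradient, for solutions of `u_t = a(u_x,u,x,t) u_{xx}` on an open interval,
under the degeneracy control `a p² ≥ A` for `|p| ≥ P`. -/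
theorem interior_gradient_estimate_one_dim :
    ∀ M A P d : ℝ, 0 < M → 0 < A → 0 < P → 0 < d →
    ∃ T' C₁ C₂ : ℝ, 0 < T' ∧ 0 < C₁ ∧ 0 < C₂ ∧
      ∀ (Ω : Set ℝ), IsOpen Ω → Convex ℝ Ω →
      ∀ (T : ℝ), 0 < T →
      ∀ (a : ℝ → ℝ → ℝ → ℝ → ℝ) (u ut ux uxx : ℝ → ℝ → ℝ),
      ContinuousOn (fun z : ℝ × ℝ × ℝ × ℝ => a z.1 z.2.1 z.2.2.1 z.2.2.2)
        (Set.univ ×ˢ Set.univ ×ˢ Ω ×ˢ Set.Icc 0 T) →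
      (∀ p q : ℝ, ∀ x ∈ Ω, ∀ t ∈ Set.Icc (0:ℝ) T, 0 < a p q x t) →
      (∀ p q : ℝ, ∀ x ∈ Ω, ∀ t ∈ Set.Icc (0:ℝ) T, P ≤ |p| → A ≤ a p q x t * p ^ 2) →
      (∀ x ∈ Ω, ∀ t ∈ Set.Ioc (0:ℝ) T,
        HasDerivWithinAt (fun s => u x s) (ut x t) (Set.Ioc 0 T) t) →
      (∀ x ∈ Ω, ∀ t ∈ Set.Ioc (0:ℝ) T, HasDerivAt (fun y => u y t) (ux x t) x) →
      (∀ x ∈ Ω, ∀ t ∈ Set.Ioc (0:ℝ) T, HasDerivAt (fun y => ux y t) (uxx x t) x) →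
      ContinuousOn (fun z : ℝ × ℝ => ut z.1 z.2) (Ω ×ˢ Set.Ioc 0 T) →
      ContinuousOn (fun z : ℝ × ℝ => ux z.1 z.2) (Ω ×ˢ Set.Ioc 0 T) →
      ContinuousOn (fun z : ℝ × ℝ => uxx z.1 z.2) (Ω ×ˢ Set.Ioc 0 T) →
      (∀ x ∈ Ω, ∀ t ∈ Set.Ioc (0:ℝ) T,
        ut x t = a (ux x t) (u x t) x t * uxx x t) →
      (∀ x ∈ Ω, ∀ x' ∈ Ω, ∀ t ∈ Set.Icc (0:ℝ) T, ∀ t' ∈ Set.Icc (0:ℝ) T,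
        u x t - u x' t' ≤ M) →
      ∀ x ∈ Ω, (∀ y : ℝ, y ∉ Ω → d ≤ |x - y|) →
      ∀ t ∈ Set.Ioc (0:ℝ) (min T T'),
        |ux x t| ≤ C₁ * Real.sqrt t * (1 + t) * Real.exp (C₂ / t) := by
  intro M A P d hM hA hP hd
  have hk : 0 < 2 * M / A := by positivity
  have hnpos : 0 < 2 * M ^ 2 / A := by positivity
  have hm : 4 * M ^ 2 / A = A * (2 * M / A) ^ 2 := by field_simp; ring
  have hn : 4 * M ^ 2 / A = 2 * M / A * M + 2 * M ^ 2 / A := by field_simp; ring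
  obtain ⟨T', hT', hsmall⟩ := exists_forall_one_add_div_mul_exp_le hk hnpos
    (δ := min (d / 2 / 4) (1 / (2 * P))) (by positivity)
  refine ⟨T', 1 / (2 * (2 * M / A)), 2 * (4 * M ^ 2 / A), hT', by positivity, by positivity, ?_⟩
  intro Ω _ _ T _ a u ut ux uxx _ hapos haA hut hux huxx _ hcux _ heq hosc x hx hdist t ht
  have ht0 : 0 < t := ht.1
  have htT : t ≤ T := ht.2.trans (min_le_left _ _)
  have htT' : t ≤ T' := ht.2.trans (min_le_right _ _)
  have hI : Icc (x - d / 2) (x + d / 2) ⊆ Ω := fun y hy => by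
    by_contra hyΩ
    have h1 := hdist y hyΩ
    have h2 : |x - y| ≤ d / 2 := abs_le.2 ⟨by linarith [hy.2], by linarith [hy.1]⟩
    linarith
  have hJ : Icc (t / 2) t ⊆ Ioc 0 T := fun s hs => ⟨by linarith [hs.1], hs.2.trans htT⟩
  have hJ' : Icc (t / 2) t ⊆ Icc 0 T := hJ.trans Ioc_subset_Icc_self
  have hE : ∀ τ, 0 < τ → τ ≤ t → Real.exp (-(2 * M ^ 2 / A) / τ) ≤ d / 2 / 4 := fun τ h0 h1 => by
    have h := (hsmall τ h0 (h1.trans htT')).trans (min_le_left _ _)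
    have := mul_pos (div_pos hk h0) (Real.exp_pos (-(2 * M ^ 2 / A) / τ))
    linarith
  have hsE : ∀ τ, 0 < τ → τ ≤ t →
      2 * M / A / τ * Real.exp (-(2 * M ^ 2 / A) / τ) * (2 * P) ≤ 1 := fun τ h0 h1 => by
    have h := (hsmall τ h0 (h1.trans htT')).trans (min_le_right _ _)
    rw [← le_div_iff₀ (by positivity)]
    have := Real.exp_pos (-(2 * M ^ 2 / A) / τ)
    linarith
  have hcux' := hcux.mono (prod_mono hI hJ)
  have hupper := gradient_le_of_two_point_estimate (M := M) (u := u) (ut := ut) (ux := ux)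
    (uxx := uxx) (b := fun z s => a (ux z s) (u z s) z s) hA hP hk hm hn hnpos (half_pos hd) ht0
    (fun z hz s hs => (hut z (hI hz) s (hJ hs)).mono hJ)
    (fun z hz s hs => hux z (hI hz) s (hJ hs)) (fun z hz s hs => huxx z (hI hz) s (hJ hs))
    hcux' (fun z hz s hs => heq z (hI hz) s (hJ hs))
    (fun z hz s hs => hapos _ _ z (hI hz) s (hJ' hs))
    (fun z hz s hs => haA _ _ z (hI hz) s (hJ' hs))
    (fun y hy z hz s hs => hosc z (hI hz) y (hI hy) s (hJ' hs) s (hJ' hs)) hE hsE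
  have hlower := gradient_le_of_two_point_estimate (M := M) (u := fun z s => -u z s)
    (ut := fun z s => -ut z s) (ux := fun z s => -ux z s) (uxx := fun z s => -uxx z s)
    (b := fun z s => a (ux z s) (u z s) z s) hA hP hk hm hn hnpos (half_pos hd) ht0
    (fun z hz s hs => ((hut z (hI hz) s (hJ hs)).mono hJ).neg)
    (fun z hz s hs => (hux z (hI hz) s (hJ hs)).neg)
    (fun z hz s hs => (huxx z (hI hz) s (hJ hs)).neg)
    hcux'.neg (fun z hz s hs => by linarith [heq z (hI hz) s (hJ hs)])
    (fun z hz s hs => hapos _ _ z (hI hz) s (hJ' hs))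
    (fun z hz s hs h => by simpa using haA _ _ z (hI hz) s (hJ' hs) (by simpa using h))
    (fun y hy z hz s hs => by linarith [hosc y (hI hy) z (hI hz) s (hJ' hs) s (hJ' hs)]) hE hsE
  refine (abs_le'.2 ⟨hupper, hlower⟩).trans ?_
  have hsqrt : t ≤ Real.sqrt t * (1 + t) := by
    have h := Real.mul_self_sqrt ht0.le
    have h0 := Real.sqrt_nonneg t
    nlinarith [sq_nonneg (Real.sqrt t - 1)]
  refine mul_le_mul_of_nonneg_right ?_ (Real.exp_pos _).le
  rw [div_eq_mul_one_div, mul_comm t, mul_assoc]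
  exact mul_le_mul_of_nonneg_left hsqrt (by positivity)
end

section
/- For all M, A, P > 0 there exist T', C₁, C₂ > 0, depending only on M, A and P, with the following property. Let T, L > 0 and let F : ℝ × ℝ × ℝ × [0,T] → ℝ, written F = F(r,p,q,t), be continuously differentiable with ∂F/∂r > 0 everywhere, ∂F/∂q ≤ 0 everywhere, and ∂F/∂r(r,p,q,t)·p² ≥ A whenever |p| ≥ P. Let u : ℝ × [0,T) → ℝ be continuous, with continuous partial derivatives u_t, u_x, u_{xx} on ℝ × (0,T), satisfying u_t = F(u_{xx},u_x,u,t), spatially periodic (u(x+L,t) = u(x,t)), and with osc_{x ∈ ℝ} u(x,t) ≤ M for every t. Then for every x ∈ ℝ and every t ∈ (0, min(T,T')): |u_x(x,t)| ≤ C₁·√t·(1+t)·exp(C₂/t). -/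
/-- The left-sided first order condition at a maximum. -/
theorem HasDerivAt.nonneg_of_isMaxOn_Icc_right {g : ℝ → ℝ} {g' a b : ℝ} (hab : a < b)
    (hg : HasDerivAt g g' b) (hmax : ∀ s ∈ Set.Icc a b, g s ≤ g b) : 0 ≤ g' := by
  have hslope := (hasDerivAt_iff_tendsto_slope_left_right.1 hg).1
  refine ge_of_tendsto hslope ?_
  filter_upwards [Ioo_mem_nhdsLT hab] with s hs
  rw [slope_def_field]
  exact div_nonneg_of_nonpos (sub_nonpos.2 (hmax s ⟨hs.1.le, hs.2.le⟩)) (sub_nonpos.2 hs.2.le)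

/-- The right-sided first order condition at a maximum. -/
theorem HasDerivAt.nonpos_of_isMaxOn_Icc_left {g : ℝ → ℝ} {g' a b : ℝ} (hab : a < b)
    (hg : HasDerivAt g g' a) (hmax : ∀ s ∈ Set.Icc a b, g s ≤ g a) : g' ≤ 0 := by
  have hslope := (hasDerivAt_iff_tendsto_slope_left_right.1 hg).2
  refine le_of_tendsto hslope ?_
  filter_upwards [Ioo_mem_nhdsGT hab] with s hs
  rw [slope_def_field]
  exact div_nonpos_of_nonpos_of_nonneg (sub_nonpos.2 (hmax s ⟨hs.1.le, hs.2.le⟩))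
    (sub_nonneg.2 hs.1.le)

/-- The second order necessary condition at a local maximum. -/
theorem IsLocalMax.second_hasDerivAt_nonpos {f f' : ℝ → ℝ} {f'' x : ℝ} (h : IsLocalMax f x)
    (hf : ∀ y, HasDerivAt f (f' y) y) (hf' : HasDerivAt f' f'' x) : f'' ≤ 0 := by
  by_contra! hpos
  have hderiv : deriv f = f' := funext fun y => (hf y).deriv
  have hmin : IsLocalMin f x := by
    refine isLocalMin_of_deriv_deriv_pos ?_ ?_ (hf x).continuousAt
    · rwa [hderiv, hf'.deriv]
    · rw [hderiv]
      exact h.hasDerivAt_eq_zero (hf x)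
  have hconst : f =ᶠ[nhds x] fun _ => f x := by
    filter_upwards [h, hmin] with y hy hy'
    exact le_antisymm hy hy'
  have hzero : f' =ᶠ[nhds x] fun _ => 0 := by
    filter_upwards [hconst.eventuallyEq_nhds] with y hy
    exact (hf y).unique ((hasDerivAt_const y (f x)).congr_of_eventuallyEq hy)
  have := hf'.unique ((hasDerivAt_const x (0 : ℝ)).congr_of_eventuallyEq hzero)
  exact hpos.ne' this

/-- A lower bound for the increments of a function in terms of a lower bound for its derivative. -/
theorem mul_sub_le_sub_of_le_hasDerivAt {f f' : ℝ → ℝ} {c a b : ℝ} (hab : a ≤ b)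
    (hf : ∀ r, HasDerivAt f (f' r) r) (hc : ∀ r, c ≤ f' r) : c * (b - a) ≤ f b - f a :=
  mul_sub_le_image_sub_of_le_deriv (fun r => (hf r).differentiableAt)
    (fun r => (hf r).deriv ▸ hc r) hab

/-- The barrier `h(z, t) = exp (-K / t) * sinh (l * z / t)` vanishes as `t → 0` when `l * z < K`. -/
theorem exists_barrier_le {K b δ t₀ : ℝ} (hb : b < K) (hδ : 0 < δ) (ht₀ : 0 < t₀) :
    ∃ t₁, 0 < t₁ ∧ t₁ < t₀ ∧ Real.exp (-K / t₁) * Real.sinh (b / t₁) ≤ δ := by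
  have hlim : Filter.Tendsto (fun t : ℝ => Real.exp (-((K - b) * t⁻¹)))
      (nhdsWithin 0 (Set.Ioi 0)) (nhds 0) :=
    Real.tendsto_exp_neg_atTop_nhds_zero.comp
      (tendsto_inv_nhdsGT_zero.const_mul_atTop (sub_pos.2 hb))
  obtain ⟨t, hlt, ht⟩ :=
    ((hlim.eventually (gt_mem_nhds hδ)).and (Ioo_mem_nhdsGT ht₀)).exists
  refine ⟨t, ht.1, ht.2, le_trans ?_ hlt.le⟩
  have hsinh : Real.sinh (b / t) ≤ Real.exp (b / t) := by
    have := Real.exp_pos (b / t)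
    have := Real.exp_pos (-(b / t))
    rw [Real.sinh_eq]
    linarith
  calc Real.exp (-K / t) * Real.sinh (b / t) ≤ Real.exp (-K / t) * Real.exp (b / t) := by gcongr
    _ = Real.exp (-((K - b) * t⁻¹)) := by
      rw [← Real.exp_add]
      congr 1
      ring

/-- The spatial slope of the barrier is at most `1 / P` for short times. -/
theorem barrier_slope_mul_le_one {M l P z t : ℝ} (hM : 0 < M) (hl : 0 < l)
    (hz : 0 ≤ z) (hzM : z ≤ M) (ht : 0 < t) (hP : 0 < P) (htP : 2 * t * P ≤ l * M ^ 2) :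
    Real.exp (-(2 * l * M) / t) * Real.cosh (l * z / t) * (l / t) * P ≤ 1 := by
  have hcosh : Real.cosh (l * z / t) ≤ Real.exp (l * M / t) := by
    have h₀ : 0 ≤ l * z / t := by positivity
    have h₁ : Real.exp (-(l * z / t)) ≤ Real.exp (l * z / t) := Real.exp_le_exp.2 (by linarith)
    have h₂ : Real.exp (l * z / t) ≤ Real.exp (l * M / t) := by gcongr
    rw [Real.cosh_eq]
    linarith
  have hs : 0 < l * M / t := by positivity
  have hexp : (l * M / t) ^ 2 / 2 ≤ Real.exp (l * M / t) := by
    have := Real.quadratic_le_exp_of_nonneg hs.le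
    linarith
  have hlP : l / t * P ≤ Real.exp (l * M / t) := by
    refine le_trans ?_ hexp
    have : l / t * P = (2 * t * P) * (l / (2 * t ^ 2)) := by field_simp
    rw [this]
    calc (2 * t * P) * (l / (2 * t ^ 2)) ≤ (l * M ^ 2) * (l / (2 * t ^ 2)) := by gcongr
      _ = (l * M / t) ^ 2 / 2 := by field_simp
  calc Real.exp (-(2 * l * M) / t) * Real.cosh (l * z / t) * (l / t) * P
      = Real.exp (-(2 * l * M) / t) * Real.cosh (l * z / t) * (l / t * P) := by ring
    _ ≤ Real.exp (-(2 * l * M) / t) * Real.exp (l * M / t) * Real.exp (l * M / t) := by gcongr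
    _ = 1 := by
      rw [← Real.exp_add, ← Real.exp_add, ← Real.exp_zero]
      congr 1
      ring

/-- Differential inequality obtained from the equation at an interior spatial maximum of
`h(u(y) - u(x)) - (y - x)`. Here `a` is the slope of the barrier `h` and `b` its second
derivative, while `r₁, q₁` and `r₀, q₀` are `u_{xx}, u` at `y` and `x`. -/
theorem slope_mul_sub_le_of_second_order {f fr fq : ℝ → ℝ → ℝ} {A a b p r₀ r₁ q₀ q₁ : ℝ}
    (ha : 0 < a) (hb : 0 < b) (hA : 0 < A)
    (hfr : ∀ r q, HasDerivAt (fun r' => f r' q) (fr r q) r)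
    (hfq : ∀ r q, HasDerivAt (fun q' => f r q') (fq r q) q)
    (hfq_nonpos : ∀ r q, fq r q ≤ 0) (hfrA : ∀ r q, A ≤ fr r q * p ^ 2)
    (hp : a * p = 1) (hq : q₀ ≤ q₁)
    (h₁ : b * p ^ 2 + a * r₁ ≤ 0) (h₀ : b * p ^ 2 - a * r₀ ≤ 0) :
    a * (f r₁ q₁ - f r₀ q₀) ≤ -(2 * A * b) := by
  have hp_pos : 0 < p := by
    by_contra! h
    nlinarith
  have hanti : f r₁ q₁ ≤ f r₁ q₀ :=
    antitone_of_hasDerivAt_nonpos (hfq r₁) (hfq_nonpos r₁) hq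
  have hr : 2 * b * p ^ 3 ≤ r₀ - r₁ := by
    have h : 2 * b * p ^ 2 ≤ a * (r₀ - r₁) := by linarith
    calc 2 * b * p ^ 3 = p * (2 * b * p ^ 2) := by ring
      _ ≤ p * (a * (r₀ - r₁)) := by gcongr
      _ = (a * p) * (r₀ - r₁) := by ring
      _ = r₀ - r₁ := by rw [hp, one_mul]
  have hr_le : r₁ ≤ r₀ := by
    have : 0 < 2 * b * p ^ 3 := by positivity
    linarith
  have hmono : A * a ^ 2 * (r₀ - r₁) ≤ f r₀ q₀ - f r₁ q₀ := by
    refine mul_sub_le_sub_of_le_hasDerivAt hr_le (fun r => hfr r q₀) fun r => ?_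
    calc A * a ^ 2 ≤ (fr r q₀ * p ^ 2) * a ^ 2 := by gcongr; exact hfrA r q₀
      _ = fr r q₀ * (a * p) ^ 2 := by ring
      _ = fr r q₀ := by rw [hp]; ring
  have hlower : 2 * A * b * p ≤ f r₀ q₀ - f r₁ q₀ := by
    calc 2 * A * b * p = A * b * 2 * p * (a * p) ^ 2 := by rw [hp]; ring
      _ = A * a ^ 2 * (2 * b * p ^ 3) := by ring
      _ ≤ A * a ^ 2 * (r₀ - r₁) := by gcongr
      _ ≤ _ := hmono
  calc a * (f r₁ q₁ - f r₀ q₀) ≤ a * (-(2 * A * b * p)) := by gcongr; linarith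
    _ = -(2 * A * b) * (a * p) := by ring
    _ = _ := by rw [hp, mul_one]

/-- The barrier controls the modulus of continuity of a periodic solution. -/
theorem periodic_barrier_estimate {M A P l T L t₀ : ℝ} (hM : 0 < M) (hA : 0 < A) (hP : 0 < P)
    (hl : 0 < l) (hlA : M < A * l) (hL : 0 < L)
    {F Fr Fq : ℝ → ℝ → ℝ → ℝ → ℝ} {u ut ux uxx : ℝ → ℝ → ℝ}
    (hFr : ∀ r p q : ℝ, ∀ t ∈ Set.Icc (0:ℝ) T,
      HasDerivAt (fun r' => F r' p q t) (Fr r p q t) r)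
    (hFq : ∀ r p q : ℝ, ∀ t ∈ Set.Icc (0:ℝ) T,
      HasDerivAt (fun q' => F r p q' t) (Fq r p q t) q)
    (hFq_nonpos : ∀ r p q : ℝ, ∀ t ∈ Set.Icc (0:ℝ) T, Fq r p q t ≤ 0)
    (hFrA : ∀ r p q : ℝ, ∀ t ∈ Set.Icc (0:ℝ) T, P ≤ |p| → A ≤ Fr r p q t * p ^ 2)
    (hu : ContinuousOn (fun z : ℝ × ℝ => u z.1 z.2) (Set.univ ×ˢ Set.Ico 0 T))
    (hut : ∀ x : ℝ, ∀ t ∈ Set.Ioo (0:ℝ) T, HasDerivAt (fun s => u x s) (ut x t) t)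
    (hux : ∀ x : ℝ, ∀ t ∈ Set.Ioo (0:ℝ) T, HasDerivAt (fun y => u y t) (ux x t) x)
    (huxx : ∀ x : ℝ, ∀ t ∈ Set.Ioo (0:ℝ) T, HasDerivAt (fun y => ux y t) (uxx x t) x)
    (heq : ∀ x : ℝ, ∀ t ∈ Set.Ioo (0:ℝ) T, ut x t = F (uxx x t) (ux x t) (u x t) t)
    (hper : ∀ x t : ℝ, u (x + L) t = u x t)
    (hosc : ∀ t ∈ Set.Ico (0:ℝ) T, ∀ x y : ℝ, u x t - u y t ≤ M)
    (ht₀ : 0 < t₀) (ht₀T : t₀ < T) (ht₀P : 2 * t₀ * P ≤ l * M ^ 2)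
    (x₀ d₀ : ℝ) (hd₀ : d₀ ∈ Set.Icc 0 L) :
    Real.exp (-(2 * l * M) / t₀) * Real.sinh (l * (u (x₀ + d₀) t₀ - u x₀ t₀) / t₀) ≤ d₀ := by
  by_contra! hcon
  set W : ℝ → ℝ → ℝ → ℝ := fun x d t =>
    Real.exp (-(2 * l * M) / t) * Real.sinh (l * (u (x + d) t - u x t) / t) - d with hW
  have hW₀ : 0 < W x₀ d₀ t₀ := sub_pos.2 hcon
  obtain ⟨t₁, ht₁, ht₁₀, hbar⟩ := exists_barrier_le (K := 2 * l * M) (b := l * M)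
    (by nlinarith [mul_pos hl hM]) (half_pos hW₀) ht₀
  have hWper : ∀ d t, Function.Periodic (fun x => W x d t) L := by
    intro d t x
    have : x + L + d = x + d + L := by ring
    simp only [hW, this, hper]
  have hcont : ContinuousOn (fun z : ℝ × ℝ × ℝ => W z.1 z.2.1 z.2.2)
      (Set.Icc 0 L ×ˢ Set.Icc 0 L ×ˢ Set.Icc t₁ t₀) := by
    have hsub : ∀ z ∈ Set.Icc (0:ℝ) L ×ˢ Set.Icc (0:ℝ) L ×ˢ Set.Icc t₁ t₀,
        z.2.2 ∈ Set.Ico 0 T := fun z hz =>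
      ⟨ht₁.le.trans hz.2.2.1, hz.2.2.2.trans_lt ht₀T⟩
    have hne : ∀ z ∈ Set.Icc (0:ℝ) L ×ˢ Set.Icc (0:ℝ) L ×ˢ Set.Icc t₁ t₀, z.2.2 ≠ 0 :=
      fun z hz => (ht₁.trans_le hz.2.2.1).ne'
    have hu₁ : ContinuousOn (fun z : ℝ × ℝ × ℝ => u (z.1 + z.2.1) z.2.2)
        (Set.Icc 0 L ×ˢ Set.Icc 0 L ×ˢ Set.Icc t₁ t₀) :=
      hu.comp (f := fun z : ℝ × ℝ × ℝ => (z.1 + z.2.1, z.2.2)) (by fun_prop)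
        fun z hz => ⟨trivial, hsub z hz⟩
    have hu₀ : ContinuousOn (fun z : ℝ × ℝ × ℝ => u z.1 z.2.2)
        (Set.Icc 0 L ×ˢ Set.Icc 0 L ×ˢ Set.Icc t₁ t₀) :=
      hu.comp (f := fun z : ℝ × ℝ × ℝ => (z.1, z.2.2)) (by fun_prop)
        fun z hz => ⟨trivial, hsub z hz⟩
    have hz : ContinuousOn (fun z : ℝ × ℝ × ℝ => z.2.2)
        (Set.Icc (0:ℝ) L ×ˢ Set.Icc (0:ℝ) L ×ˢ Set.Icc t₁ t₀) := by fun_prop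
    refine ContinuousOn.sub (ContinuousOn.mul ?_ ?_) (by fun_prop)
    · exact Real.continuous_exp.comp_continuousOn (continuousOn_const.div hz hne)
    · exact Real.continuous_sinh.comp_continuousOn
        ((continuousOn_const.mul (hu₁.sub hu₀)).div hz hne)
  obtain ⟨⟨x, d, t⟩, ⟨-, hd, ht⟩, hmax'⟩ :=
    (isCompact_Icc.prod (isCompact_Icc.prod isCompact_Icc)).exists_isMaxOn
      ⟨(0, 0, t₀), ⟨le_rfl, hL.le⟩, ⟨le_rfl, hL.le⟩, ⟨ht₁₀.le, le_rfl⟩⟩ hcont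
  have hmax : ∀ x' d' t', d' ∈ Set.Icc 0 L → t' ∈ Set.Icc t₁ t₀ → W x' d' t' ≤ W x d t := by
    intro x' d' t' hd' ht'
    obtain ⟨x'', hx'', hWx⟩ := (hWper d' t').exists_mem_Ico₀ hL x'
    have := hmax' (a := (x'', d', t')) ⟨⟨hx''.1, hx''.2.le⟩, hd', ht'⟩
    exact hWx.trans_le this
  replace hd : d ∈ Set.Icc 0 L := hd
  replace ht : t ∈ Set.Icc t₁ t₀ := ht
  clear hmax'
  have hWmax : W x₀ d₀ t₀ ≤ W x d t := hmax x₀ d₀ t₀ hd₀ ⟨ht₁₀.le, le_rfl⟩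
  have htpos : 0 < t := ht₁.trans_le ht.1
  have htT : t < T := ht.2.trans_lt ht₀T
  have htI : t ∈ Set.Ioo 0 T := ⟨htpos, htT⟩
  have hWpos : 0 < W x d t := hW₀.trans_le hWmax
  set E := Real.exp (-(2 * l * M) / t) with hE
  have hEpos : 0 < E := Real.exp_pos _
  set z := u (x + d) t - u x t with hz
  have hzM : z ≤ M := hosc t ⟨htpos.le, htT⟩ _ _
  have hsinh : 0 < Real.sinh (l * z / t) := by
    have : 0 < E * Real.sinh (l * z / t) - d := hWpos
    have h : 0 < E * Real.sinh (l * z / t) := by linarith [hd.1]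
    exact pos_of_mul_pos_right h hEpos.le
  have hzpos : 0 < z := by
    by_contra! h
    exact hsinh.not_ge (Real.sinh_nonpos_iff.2
      (div_nonpos_of_nonpos_of_nonneg (mul_nonpos_of_nonneg_of_nonpos hl.le h) htpos.le))
  have hdpos : 0 < d := by
    refine lt_of_le_of_ne hd.1 fun h => ?_
    rw [hz, ← h, add_zero, sub_self] at hzpos
    exact hzpos.false
  have hdL : d < L := by
    refine lt_of_le_of_ne hd.2 fun h => ?_
    rw [hz, h, hper, sub_self] at hzpos
    exact hzpos.false
  have htlt : t₁ < t := by
    refine lt_of_le_of_ne ht.1 fun h => ?_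
    have hle : W x d t ≤ W x₀ d₀ t₀ / 2 := by
      refine le_trans ?_ hbar
      rw [h]
      have : E * Real.sinh (l * z / t) ≤ E * Real.sinh (l * M / t) := by
        refine mul_le_mul_of_nonneg_left (Real.sinh_le_sinh.2 ?_) hEpos.le
        gcongr
      change E * Real.sinh (l * z / t) - d ≤ _
      linarith
    linarith
  have hcosh : 0 < Real.cosh (l * z / t) := Real.cosh_pos _
  have hnear : ∀ᶠ y in nhds (x + d), y - x ∈ Set.Icc 0 L := by
    have : Filter.Tendsto (fun y => y - x) (nhds (x + d)) (nhds d) := by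
      simpa using (show Continuous fun y => y - x by fun_prop).tendsto (x + d)
    exact this (Icc_mem_nhds hdpos hdL)
  have hnear' : ∀ᶠ y in nhds x, x + d - y ∈ Set.Icc 0 L := by
    have : Filter.Tendsto (fun y => x + d - y) (nhds x) (nhds d) := by
      simpa using (show Continuous fun y => x + d - y by fun_prop).tendsto x
    exact this (Icc_mem_nhds hdpos hdL)
  -- First and second order conditions in the right endpoint.
  have hmax₁ : IsLocalMax (fun y => E * Real.sinh (l * (u y t - u x t) / t) - (y - x)) (x + d) := by
    filter_upwards [hnear] with y hy
    have := hmax x (y - x) t hy ht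
    simpa only [hW, add_sub_cancel, add_sub_cancel_left] using this
  have hder₁ : ∀ y, HasDerivAt (fun y => E * Real.sinh (l * (u y t - u x t) / t) - (y - x))
      (E * (Real.cosh (l * (u y t - u x t) / t) * (l * ux y t / t)) - 1) y := fun y =>
    (((((hux y t htI).sub_const _).const_mul l).div_const t).sinh.const_mul E).sub
      ((hasDerivAt_id y).sub_const x)
  have hdder₁ : HasDerivAt
      (fun y => E * (Real.cosh (l * (u y t - u x t) / t) * (l * ux y t / t)) - 1)
      (E * (Real.sinh (l * z / t) * (l * ux (x + d) t / t) * (l * ux (x + d) t / t) +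
        Real.cosh (l * z / t) * (l * uxx (x + d) t / t))) (x + d) :=
    (((((((hux (x + d) t htI).sub_const _).const_mul l).div_const t).cosh.mul
      (((huxx (x + d) t htI).const_mul l).div_const t))).const_mul E).sub_const 1
  have hfst₁ := hmax₁.hasDerivAt_eq_zero (hder₁ (x + d))
  have hsnd₁ := hmax₁.second_hasDerivAt_nonpos hder₁ hdder₁
  -- First and second order conditions in the left endpoint.
  have hmax₀ : IsLocalMax
      (fun y => E * Real.sinh (l * (u (x + d) t - u y t) / t) - (x + d - y)) x := by
    filter_upwards [hnear'] with y hy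
    have := hmax y (x + d - y) t hy ht
    simpa only [hW, add_sub_cancel, add_sub_cancel_left] using this
  have hder₀ : ∀ y, HasDerivAt
      (fun y => E * Real.sinh (l * (u (x + d) t - u y t) / t) - (x + d - y))
      (E * (Real.cosh (l * (u (x + d) t - u y t) / t) * (l * -ux y t / t)) - -1) y := fun y =>
    (((((hux y t htI).const_sub _).const_mul l).div_const t).sinh.const_mul E).sub
      ((hasDerivAt_id y).const_sub (x + d))
  have hdder₀ : HasDerivAt
      (fun y => E * (Real.cosh (l * (u (x + d) t - u y t) / t) * (l * -ux y t / t)) - -1)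
      (E * (Real.sinh (l * z / t) * (l * -ux x t / t) * (l * -ux x t / t) +
        Real.cosh (l * z / t) * (l * -uxx x t / t))) x :=
    (((((((hux x t htI).const_sub _).const_mul l).div_const t).cosh.mul
      (((huxx x t htI).neg.const_mul l).div_const t))).const_mul E).sub_const (-1)
  have hfst₀ := hmax₀.hasDerivAt_eq_zero (hder₀ x)
  have hsnd₀ := hmax₀.second_hasDerivAt_nonpos hder₀ hdder₀
  -- First order condition in time.
  have htime : HasDerivAt (fun s => W x d s)
      (E * (2 * l * M / t ^ 2) * Real.sinh (l * z / t) +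
        E * (Real.cosh (l * z / t) *
          ((l * (ut (x + d) t - ut x t) * t - l * z * 1) / t ^ 2))) t := by
    have hE' : HasDerivAt (fun s => Real.exp (-(2 * l * M) / s)) (E * (2 * l * M / t ^ 2)) t := by
      refine (((hasDerivAt_const t (-(2 * l * M))).div
        (hasDerivAt_id t) htpos.ne').exp).congr_deriv ?_
      symm
      change _ = E * ((0 * t - -(2 * l * M) * 1) / t ^ 2)
      ring
    have hS := (((((hut (x + d) t htI).sub (hut x t htI)).const_mul l).div
      (hasDerivAt_id t) htpos.ne').sinh)
    exact (hE'.mul hS).sub_const d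
  have htnonneg := htime.nonneg_of_isMaxOn_Icc_right htlt
    fun s hs => hmax x d s hd ⟨hs.1, hs.2.trans ht.2⟩
  set S := Real.sinh (l * z / t) with hS
  set C := Real.cosh (l * z / t) with hC
  set a := E * C * (l / t) with ha
  have hapos : 0 < a := by positivity
  have hp₁ : a * ux (x + d) t = 1 := by
    rw [ha]
    linear_combination hfst₁
  have hp₀ : a * ux x t = 1 := by
    rw [ha]
    linear_combination -hfst₀
  have hpeq : ux x t = ux (x + d) t := mul_left_cancel₀ hapos.ne' (hp₀.trans hp₁.symm)
  have hslope : a * P ≤ 1 := by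
    refine barrier_slope_mul_le_one hM hl hzpos.le hzM htpos hP (le_trans ?_ ht₀P)
    have := ht.2
    gcongr
  have hpP : P ≤ |ux (x + d) t| := by
    refine le_trans ?_ (le_abs_self _)
    exact le_of_mul_le_mul_left (hslope.trans hp₁.ge) hapos
  have htIcc : t ∈ Set.Icc 0 T := ⟨htpos.le, htT.le⟩
  have hkey := slope_mul_sub_le_of_second_order
    (f := fun r q => F r (ux (x + d) t) q t) (fr := fun r q => Fr r (ux (x + d) t) q t)
    (fq := fun r q => Fq r (ux (x + d) t) q t) (A := A) (a := a) (b := E * S * (l / t) ^ 2)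
    (p := ux (x + d) t) (r₀ := uxx x t) (r₁ := uxx (x + d) t) (q₀ := u x t) (q₁ := u (x + d) t)
    hapos (by positivity) hA (fun r q => hFr r _ q t htIcc) (fun r q => hFq r _ q t htIcc)
    (fun r q => hFq_nonpos r _ q t htIcc) (fun r q => hFrA r _ q t htIcc hpP) hp₁
    (by linarith)
    (by
      refine le_of_eq_of_le ?_ hsnd₁
      rw [ha]
      ring)
    (by
      refine le_of_eq_of_le ?_ hsnd₀
      rw [ha, hpeq]
      ring)
  have heq₀ := heq x t htI
  rw [hpeq] at heq₀
  rw [← heq (x + d) t htI, ← heq₀] at hkey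
  have hrewrite : E * (2 * l * M / t ^ 2) * S +
        E * (C * ((l * (ut (x + d) t - ut x t) * t - l * z * 1) / t ^ 2)) =
      E * (2 * l * M / t ^ 2) * S + a * (ut (x + d) t - ut x t) - E * C * (l * z / t ^ 2) := by
    rw [ha]
    field_simp
    ring
  rw [hrewrite] at htnonneg
  have hlast : 0 < E * C * (l * z / t ^ 2) := by positivity
  have hcompare : E * (2 * l * M / t ^ 2) * S ≤ 2 * A * (E * S * (l / t) ^ 2) := by
    calc E * (2 * l * M / t ^ 2) * S ≤ E * (2 * l * (A * l) / t ^ 2) * S := by gcongr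
      _ = _ := by ring
  linarith

/-- One-sided gradient bound for a periodic solution. -/
theorem periodic_gradient_upper_bound {M A P l T L t : ℝ} (hM : 0 < M) (hA : 0 < A) (hP : 0 < P)
    (hl : 0 < l) (hlA : M < A * l) (hL : 0 < L)
    {F Fr Fq : ℝ → ℝ → ℝ → ℝ → ℝ} {u ut ux uxx : ℝ → ℝ → ℝ}
    (hFr : ∀ r p q : ℝ, ∀ t ∈ Set.Icc (0:ℝ) T,
      HasDerivAt (fun r' => F r' p q t) (Fr r p q t) r)
    (hFq : ∀ r p q : ℝ, ∀ t ∈ Set.Icc (0:ℝ) T,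
      HasDerivAt (fun q' => F r p q' t) (Fq r p q t) q)
    (hFq_nonpos : ∀ r p q : ℝ, ∀ t ∈ Set.Icc (0:ℝ) T, Fq r p q t ≤ 0)
    (hFrA : ∀ r p q : ℝ, ∀ t ∈ Set.Icc (0:ℝ) T, P ≤ |p| → A ≤ Fr r p q t * p ^ 2)
    (hu : ContinuousOn (fun z : ℝ × ℝ => u z.1 z.2) (Set.univ ×ˢ Set.Ico 0 T))
    (hut : ∀ x : ℝ, ∀ t ∈ Set.Ioo (0:ℝ) T, HasDerivAt (fun s => u x s) (ut x t) t)
    (hux : ∀ x : ℝ, ∀ t ∈ Set.Ioo (0:ℝ) T, HasDerivAt (fun y => u y t) (ux x t) x)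
    (huxx : ∀ x : ℝ, ∀ t ∈ Set.Ioo (0:ℝ) T, HasDerivAt (fun y => ux y t) (uxx x t) x)
    (heq : ∀ x : ℝ, ∀ t ∈ Set.Ioo (0:ℝ) T, ut x t = F (uxx x t) (ux x t) (u x t) t)
    (hper : ∀ x t : ℝ, u (x + L) t = u x t)
    (hosc : ∀ t ∈ Set.Ico (0:ℝ) T, ∀ x y : ℝ, u x t - u y t ≤ M)
    (ht : 0 < t) (htT : t < T) (htP : 2 * t * P ≤ l * M ^ 2) (x : ℝ) :
    ux x t ≤ t / l * Real.exp (2 * l * M / t) := by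
  have hder : HasDerivAt
      (fun y => Real.exp (-(2 * l * M) / t) * Real.sinh (l * (u y t - u x t) / t) - (y - x))
      (Real.exp (-(2 * l * M) / t) *
        (Real.cosh (l * (u x t - u x t) / t) * (l * ux x t / t)) - 1) x :=
    (((((hux x t ⟨ht, htT⟩).sub_const _).const_mul l).div_const t).sinh.const_mul _).sub
      ((hasDerivAt_id x).sub_const x)
  have hle := hder.nonpos_of_isMaxOn_Icc_left (b := x + L) (by linarith) fun y hy => by
    have := periodic_barrier_estimate hM hA hP hl hlA hL hFr hFq hFq_nonpos hFrA hu hut hux huxx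
      heq hper hosc ht htT htP x (y - x) ⟨by linarith [hy.1], by linarith [hy.2]⟩
    rw [add_sub_cancel] at this
    simpa using this
  rw [sub_self, mul_zero, zero_div, Real.cosh_zero, one_mul] at hle
  have hinv : Real.exp (2 * l * M / t) * Real.exp (-(2 * l * M) / t) = 1 := by
    rw [← Real.exp_add, ← Real.exp_zero]
    congr 1
    ring
  have hpos : 0 < t / l * Real.exp (2 * l * M / t) := by positivity
  calc ux x t = (Real.exp (2 * l * M / t) * Real.exp (-(2 * l * M) / t)) * ux x t := by
        rw [hinv, one_mul]
    _ = t / l * Real.exp (2 * l * M / t) *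
        (Real.exp (-(2 * l * M) / t) * (l * ux x t / t)) := by field_simp
    _ ≤ t / l * Real.exp (2 * l * M / t) * 1 := by
        gcongr
        linarith
    _ = _ := mul_one _

/-- Short-time gradient estimate for periodic solutions of the
fully nonlinear equation `u_t = F(u_{xx},u_x,u,t)` with `F_r > 0`, `F_q ≤ 0`,
and the degeneracy control `F_r · p² ≥ A` for `|p| ≥ P`. -/
theorem periodic_gradient_estimate_fully_nonlinear :
    ∀ M A P : ℝ, 0 < M → 0 < A → 0 < P →
    ∃ T' C₁ C₂ : ℝ, 0 < T' ∧ 0 < C₁ ∧ 0 < C₂ ∧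
      ∀ (T L : ℝ), 0 < T → 0 < L →
      ∀ (F Fr Fq : ℝ → ℝ → ℝ → ℝ → ℝ) (u ut ux uxx : ℝ → ℝ → ℝ),
      ContDiffOn ℝ 1 (fun z : ℝ × ℝ × ℝ × ℝ => F z.1 z.2.1 z.2.2.1 z.2.2.2)
        (Set.univ ×ˢ Set.univ ×ˢ Set.univ ×ˢ Set.Icc 0 T) →
      (∀ r p q : ℝ, ∀ t ∈ Set.Icc (0:ℝ) T,
        HasDerivAt (fun r' => F r' p q t) (Fr r p q t) r) →
      (∀ r p q : ℝ, ∀ t ∈ Set.Icc (0:ℝ) T,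
        HasDerivAt (fun q' => F r p q' t) (Fq r p q t) q) →
      (∀ r p q : ℝ, ∀ t ∈ Set.Icc (0:ℝ) T, 0 < Fr r p q t) →
      (∀ r p q : ℝ, ∀ t ∈ Set.Icc (0:ℝ) T, Fq r p q t ≤ 0) →
      (∀ r p q : ℝ, ∀ t ∈ Set.Icc (0:ℝ) T, P ≤ |p| → A ≤ Fr r p q t * p ^ 2) →
      ContinuousOn (fun z : ℝ × ℝ => u z.1 z.2) (Set.univ ×ˢ Set.Ico 0 T) →
      (∀ x : ℝ, ∀ t ∈ Set.Ioo (0:ℝ) T, HasDerivAt (fun s => u x s) (ut x t) t) →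
      (∀ x : ℝ, ∀ t ∈ Set.Ioo (0:ℝ) T, HasDerivAt (fun y => u y t) (ux x t) x) →
      (∀ x : ℝ, ∀ t ∈ Set.Ioo (0:ℝ) T, HasDerivAt (fun y => ux y t) (uxx x t) x) →
      ContinuousOn (fun z : ℝ × ℝ => ut z.1 z.2) (Set.univ ×ˢ Set.Ioo 0 T) →
      ContinuousOn (fun z : ℝ × ℝ => ux z.1 z.2) (Set.univ ×ˢ Set.Ioo 0 T) →
      ContinuousOn (fun z : ℝ × ℝ => uxx z.1 z.2) (Set.univ ×ˢ Set.Ioo 0 T) →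
      (∀ x : ℝ, ∀ t ∈ Set.Ioo (0:ℝ) T,
        ut x t = F (uxx x t) (ux x t) (u x t) t) →
      (∀ x t : ℝ, u (x + L) t = u x t) →
      (∀ t ∈ Set.Ico (0:ℝ) T, ∀ x y : ℝ, u x t - u y t ≤ M) →
      ∀ x : ℝ, ∀ t ∈ Set.Ioo (0:ℝ) (min T T'),
        |ux x t| ≤ C₁ * Real.sqrt t * (1 + t) * Real.exp (C₂ / t) := by
  intro M A P hM hA hP
  obtain ⟨l, hl, hlA⟩ : ∃ l : ℝ, 0 < l ∧ M < A * l :=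
    ⟨2 * M / A, by positivity, by field_simp; linarith⟩
  refine ⟨l * M ^ 2 / (2 * P), 1 / l, 2 * l * M, by positivity, by positivity, by positivity, ?_⟩
  intro T L _ hL F Fr Fq u ut ux uxx _ hFr hFq _ hFq_nonpos hFrA hu hut hux huxx _ _ _ heq hper
    hosc x t ht
  have htpos : 0 < t := ht.1
  have htT : t < T := ht.2.trans_le (min_le_left _ _)
  have htP : 2 * t * P ≤ l * M ^ 2 := by
    have h := (ht.2.trans_le (min_le_right _ _)).le
    rw [le_div_iff₀ (by positivity)] at h
    linarith
  have hupper := periodic_gradient_upper_bound hM hA hP hl hlA hL hFr hFq hFq_nonpos hFrA hu hut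
    hux huxx heq hper hosc htpos htT htP x
  have hlower := periodic_gradient_upper_bound (F := fun r p => F r (-p))
    (Fr := fun r p => Fr r (-p))
    (Fq := fun r p => Fq r (-p)) (u := fun y => u (-y)) (ut := fun y => ut (-y))
    (ux := fun y s => -ux (-y) s) (uxx := fun y => uxx (-y)) hM hA hP hl hlA hL
    (fun r p => hFr r (-p)) (fun r p => hFq r (-p)) (fun r p => hFq_nonpos r (-p))
    (fun r p q s hs hp => by simpa using hFrA r (-p) q s hs (by rwa [abs_neg]))
    (hu.comp (f := fun z : ℝ × ℝ => (-z.1, z.2)) (by fun_prop) fun z hz => ⟨trivial, hz.2⟩)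
    (fun y => hut (-y))
    (fun y s hs => ((hux (-y) s hs).comp y (hasDerivAt_neg y)).congr_deriv (by ring))
    (fun y s hs => ((huxx (-y) s hs).comp y (hasDerivAt_neg y)).neg.congr_deriv (by ring))
    (fun y s hs => by simpa using heq (-y) s hs)
    (fun y s => by simpa using (hper (-(y + L)) s).symm)
    (fun s hs y y' => hosc s hs (-y) (-y')) htpos htT htP (-x)
  simp only [neg_neg] at hlower
  have habs : |ux x t| ≤ t / l * Real.exp (2 * l * M / t) := abs_le'.2 ⟨hupper, hlower⟩
  refine habs.trans ?_
  have hsqrt : Real.sqrt t ≤ 1 + t := by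
    rw [Real.sqrt_le_left (by positivity)]
    nlinarith
  have ht_le : t ≤ Real.sqrt t * (1 + t) := by
    calc t = Real.sqrt t * Real.sqrt t := (Real.mul_self_sqrt htpos.le).symm
      _ ≤ _ := by gcongr
  calc t / l * Real.exp (2 * l * M / t) = 1 / l * t * Real.exp (2 * l * M / t) := by ring
    _ ≤ 1 / l * (Real.sqrt t * (1 + t)) * Real.exp (2 * l * M / t) := by gcongr
    _ = _ := by ring
end

section
/- Let Ω = (x₀,x₁) ⊂ ℝ be a bounded open interval, let L, Λ, T > 0 and h ∈ ℝ. Let a : ℝ × ℝ × [x₀,x₁] × [0,T] → ℝ be continuous and positive with a(p,q,x,t) ≤ Λ whenever |p| ≤ L. Let u : [x₀,x₁] × [0,T] → ℝ be continuous, with continuous partial derivatives u_t, u_x, u_{xx} on Ω × (0,T], satisfying u_t = a(u_x,u,x,t)·u_{xx} there, and suppose u(x,0) ≤ L·|x−h| for all x ∈ [x₀,x₁] and u(x,t) ≤ L·|x−h| for x ∈ {x₀,x₁} and all t ∈ [0,T]. Then for all x ∈ [x₀,x₁] and t ∈ (0,T]: u(x,t) ≤ L·(x−h)·erf((x−h)/(2·√(Λt)))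 + 2L·√(Λt/π)·exp(−(x−h)²/(4Λt)). -/
/-- The error function `erf s = (2/√π) ∫₀ˢ exp(−y²) dy`. -/
noncomputable def erf (s : ℝ) : ℝ :=
  (2 / Real.sqrt Real.pi) * ∫ y in (0:ℝ)..s, Real.exp (-(y ^ 2))

open Filter Topology Set

theorem hasDerivAt_erf (s : ℝ) :
    HasDerivAt erf (2 / √Real.pi * Real.exp (-(s ^ 2))) s := by
  have hc : Continuous fun y : ℝ => Real.exp (-(y ^ 2)) := by fun_prop
  exact (hc.integral_hasStrictDerivAt 0 s).hasDerivAt.const_mul _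

theorem continuous_erf : Continuous erf :=
  continuous_iff_continuousAt.2 fun s => (hasDerivAt_erf s).continuousAt

theorem erf_neg (s : ℝ) : erf (-s) = -erf s := by
  have h := intervalIntegral.integral_comp_neg (a := 0) (b := s)
    (fun y : ℝ => Real.exp (-(y ^ 2)))
  simp only [neg_sq, neg_zero] at h
  rw [erf, erf, intervalIntegral.integral_symm, ← h]
  ring

theorem tendsto_erf_atTop : Tendsto erf atTop (𝓝 1) := by
  have hi : MeasureTheory.IntegrableOn (fun y : ℝ => Real.exp (-(y ^ 2))) (Ioi 0) := by
    simpa using (integrable_exp_neg_mul_sq one_pos).integrableOn (s := Ioi (0 : ℝ))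
  have hlim := (MeasureTheory.intervalIntegral_tendsto_integral_Ioi 0 hi tendsto_id).const_mul
    (2 / √Real.pi)
  have hval : ∫ y in Ioi (0 : ℝ), Real.exp (-(y ^ 2)) = √Real.pi / 2 := by
    simpa using integral_gaussian_Ioi 1
  have hpi : √Real.pi ≠ 0 := (Real.sqrt_pos.2 Real.pi_pos).ne'
  rw [hval, show 2 / √Real.pi * (√Real.pi / 2) = 1 by field_simp] at hlim
  exact hlim

theorem monotone_erf : Monotone erf :=
  monotone_of_hasDerivAt_nonneg hasDerivAt_erf fun s => by positivity

theorem abs_erf_le_one (s : ℝ) : |erf s| ≤ 1 := by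
  have h : ∀ s, erf s ≤ 1 := fun s => monotone_erf.ge_of_tendsto tendsto_erf_atTop s
  refine abs_le.2 ⟨?_, h s⟩
  have := h (-s)
  rw [erf_neg] at this
  linarith

/-- The primitive `z erf z + exp(-z²)/√π` of the error function dominates `|z|`. -/
theorem abs_le_mul_erf_add (z : ℝ) :
    |z| ≤ z * erf z + Real.exp (-(z ^ 2)) / √Real.pi := by
  have hpos : ∀ z : ℝ, 0 ≤ z → z ≤ z * erf z + Real.exp (-(z ^ 2)) / √Real.pi := by
    intro z hz
    have hd : ∀ s, HasDerivAt (fun s => z * erf s + Real.exp (-(s ^ 2)) / √Real.pi)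
        (z * (2 / √Real.pi * Real.exp (-(s ^ 2)))
          + Real.exp (-(s ^ 2)) * (-(2 * s)) / √Real.pi) s := by
      intro s
      have he : HasDerivAt (fun s : ℝ => -(s ^ 2)) (-(2 * s)) s := by
        simpa using (hasDerivAt_pow 2 s).fun_neg
      exact ((hasDerivAt_erf s).const_mul z).add (he.exp.div_const _)
    have hanti : AntitoneOn (fun s => z * erf s + Real.exp (-(s ^ 2)) / √Real.pi) (Ici z) := by
      refine antitoneOn_of_hasDerivWithinAt_nonpos (convex_Ici z)
        (fun s _ => (hd s).continuousAt.continuousWithinAt)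
        (fun s _ => (hd s).hasDerivWithinAt) fun s hs => ?_
      rw [interior_Ici, mem_Ioi] at hs
      have : z * (2 / √Real.pi * Real.exp (-(s ^ 2)))
          + Real.exp (-(s ^ 2)) * (-(2 * s)) / √Real.pi
          = (2 / √Real.pi * Real.exp (-(s ^ 2))) * (z - s) := by ring
      rw [this]
      exact mul_nonpos_of_nonneg_of_nonpos (by positivity) (by linarith)
    have hlim : Tendsto (fun s => z * erf s) atTop (𝓝 z) := by
      simpa using tendsto_erf_atTop.const_mul z
    refine le_of_tendsto hlim ?_
    filter_upwards [eventually_ge_atTop z] with s hs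
    have h1 := hanti self_mem_Ici hs hs
    have h2 : 0 ≤ Real.exp (-(s ^ 2)) / √Real.pi := by positivity
    simp only at h1
    linarith
  rcases le_total 0 z with hz | hz
  · rw [abs_of_nonneg hz]
    exact hpos z hz
  · have h := hpos (-z) (by linarith)
    rw [erf_neg, neg_sq] at h
    rw [abs_of_nonpos hz]
    linarith

/-- The solution of the heat equation on the line with initial values `|y|`. -/
noncomputable def heatCone (y τ : ℝ) : ℝ :=
  y * erf (y / (2 * √τ)) + 2 * √τ * (Real.exp (-((y / (2 * √τ)) ^ 2)) / √Real.pi)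

theorem abs_le_heatCone (y : ℝ) {τ : ℝ} (hτ : 0 < τ) : |y| ≤ heatCone y τ := by
  have hs : 0 < √τ := Real.sqrt_pos.2 hτ
  have h := mul_le_mul_of_nonneg_left (abs_le_mul_erf_add (y / (2 * √τ)))
    (by positivity : 0 ≤ 2 * √τ)
  have h1 : 2 * √τ * |y / (2 * √τ)| = |y| := by
    rw [abs_div, abs_of_pos (by positivity : 0 < 2 * √τ)]
    field_simp
  have h2 : 2 * √τ * (y / (2 * √τ)) = y := by field_simp
  rw [h1, mul_add, ← mul_assoc, h2] at h
  exact h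

/-- The common value of the second space derivative and the time derivative of `heatCone`. -/
noncomputable def heatConeCurvature (y τ : ℝ) : ℝ :=
  Real.exp (-((y / (2 * √τ)) ^ 2)) / (√Real.pi * √τ)

theorem heatConeCurvature_nonneg (y τ : ℝ) : 0 ≤ heatConeCurvature y τ := by
  unfold heatConeCurvature
  positivity

theorem hasDerivAt_heatCone_space (y : ℝ) {τ : ℝ} (hτ : 0 < τ) :
    HasDerivAt (fun y => heatCone y τ) (erf (y / (2 * √τ))) y := by
  have hs : 0 < √τ := Real.sqrt_pos.2 hτ
  have hpi : 0 < √Real.pi := Real.sqrt_pos.2 Real.pi_pos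
  have hz : HasDerivAt (fun y : ℝ => y / (2 * √τ)) (1 / (2 * √τ)) y :=
    (hasDerivAt_id y).div_const _
  have he := ((hz.fun_pow 2).fun_neg.exp.div_const (√Real.pi)).const_mul (2 * √τ)
  have hf := (hasDerivAt_id y).mul ((hasDerivAt_erf _).comp y hz)
  refine (hf.add he).congr_deriv ?_
  simp only [id, Function.comp_apply, Nat.add_one_sub_one, pow_one]
  field_simp
  ring

theorem hasDerivAt_erf_div (y : ℝ) {τ : ℝ} (hτ : 0 < τ) :
    HasDerivAt (fun y => erf (y / (2 * √τ))) (heatConeCurvature y τ) y := by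
  have hs : 0 < √τ := Real.sqrt_pos.2 hτ
  have hz : HasDerivAt (fun y : ℝ => y / (2 * √τ)) (1 / (2 * √τ)) y :=
    (hasDerivAt_id y).div_const _
  refine ((hasDerivAt_erf _).comp y hz).congr_deriv ?_
  unfold heatConeCurvature
  field_simp

theorem hasDerivAt_heatCone_time (y : ℝ) {τ : ℝ} (hτ : 0 < τ) :
    HasDerivAt (fun τ => heatCone y τ) (heatConeCurvature y τ) τ := by
  have hs : 0 < √τ := Real.sqrt_pos.2 hτ
  have hpi : 0 < √Real.pi := Real.sqrt_pos.2 Real.pi_pos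
  have hr : HasDerivAt (fun τ : ℝ => 2 * √τ) (2 * (1 / (2 * √τ))) τ :=
    (Real.hasDerivAt_sqrt hτ.ne').const_mul 2
  have hz := (hasDerivAt_const τ y).fun_div hr (by positivity)
  have he := hr.mul ((hz.fun_pow 2).fun_neg.exp.div_const (√Real.pi))
  have hf := ((hasDerivAt_erf _).comp τ hz).const_mul y
  refine (hf.add he).congr_deriv ?_
  simp only [heatConeCurvature, Nat.add_one_sub_one, pow_one]
  field_simp
  ring

theorem continuousOn_heatCone :
    ContinuousOn (fun z : ℝ × ℝ => heatCone z.1 z.2) {z | 0 < z.2} := by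
  have hz : ContinuousOn (fun z : ℝ × ℝ => z.1 / (2 * √z.2)) {z | 0 < z.2} :=
    continuousOn_fst.div (by fun_prop) fun z hz => by
      have : 0 < √z.2 := Real.sqrt_pos.2 hz
      positivity
  have he := continuous_erf.comp_continuousOn hz
  unfold heatCone
  exact (continuousOn_fst.mul he).add (ContinuousOn.mul (by fun_prop) (by fun_prop))

/-- At a local maximum the second derivative is nonpositive. -/
theorem IsLocalMax.second_deriv_nonpos {f f' : ℝ → ℝ} {f'' c : ℝ} (hc : IsLocalMax f c)
    (hf : ∀ᶠ y in 𝓝 c, HasDerivAt f (f' y) y) (hf' : HasDerivAt f' f'' c) : f'' ≤ 0 := by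
  by_contra! hpos
  have hd : deriv f =ᶠ[𝓝 c] f' := hf.mono fun y hy => hy.deriv
  have hdd : deriv (deriv f) c = f'' := hd.deriv_eq.trans hf'.deriv
  have hmin : IsLocalMin f c := isLocalMin_of_deriv_deriv_pos (hdd ▸ hpos) hc.deriv_eq_zero
    hf.self_of_nhds.continuousAt
  have hconst : f =ᶠ[𝓝 c] fun _ => f c := by
    filter_upwards [hc, hmin] with y h1 h2 using le_antisymm h1 h2
  have hzero : deriv (deriv f) c = 0 := by
    have := hconst.deriv.deriv_eq
    simpa using this
  linarith

/-- At a maximum over the past the time derivative is nonnegative. -/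
theorem HasDerivWithinAt.nonneg_of_forall_le_Ioc {f : ℝ → ℝ} {f' T t : ℝ} (ht : t ∈ Ioc 0 T)
    (hf : HasDerivWithinAt f f' (Ioc 0 T) t) (hmax : ∀ s ∈ Ioc 0 T, f s ≤ f t) : 0 ≤ f' := by
  have hf₀ : HasDerivWithinAt f f' (Ioo 0 t) t :=
    hf.mono fun s hs => ⟨hs.1, hs.2.le.trans ht.2⟩
  have hlim := (hasDerivWithinAt_iff_tendsto_slope' (by simp)).1 hf₀
  have : (𝓝[Ioo 0 t] t).NeBot := right_nhdsWithin_Ioo_neBot ht.1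
  refine ge_of_tendsto hlim ?_
  filter_upwards [self_mem_nhdsWithin] with s hs
  rw [slope_def_field]
  exact div_nonneg_of_nonpos (by linarith [hmax s ⟨hs.1, hs.2.le.trans ht.2⟩]) (by linarith [hs.2])

/-- Displacement estimate for a solution whose initial and
lateral boundary data lie below the cone `L·|x−h|`. -/
theorem displacement_estimate_lipschitz
    (x₀ x₁ L Λ T h : ℝ) (hx : x₀ < x₁) (hL : 0 < L) (hΛ : 0 < Λ) (hT : 0 < T)
    (a : ℝ → ℝ → ℝ → ℝ → ℝ)
    (ha_cont : ContinuousOn (fun z : ℝ × ℝ × ℝ × ℝ => a z.1 z.2.1 z.2.2.1 z.2.2.2)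
      (Set.univ ×ˢ Set.univ ×ˢ Set.Icc x₀ x₁ ×ˢ Set.Icc 0 T))
    (ha_pos : ∀ p q : ℝ, ∀ x ∈ Set.Icc x₀ x₁, ∀ t ∈ Set.Icc (0:ℝ) T, 0 < a p q x t)
    (ha_ub : ∀ p q : ℝ, ∀ x ∈ Set.Icc x₀ x₁, ∀ t ∈ Set.Icc (0:ℝ) T,
      |p| ≤ L → a p q x t ≤ Λ)
    (u ut ux uxx : ℝ → ℝ → ℝ)
    (hu_cont : ContinuousOn (fun z : ℝ × ℝ => u z.1 z.2) (Set.Icc x₀ x₁ ×ˢ Set.Icc 0 T))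
    (hut : ∀ x ∈ Set.Ioo x₀ x₁, ∀ t ∈ Set.Ioc (0:ℝ) T,
      HasDerivWithinAt (fun s => u x s) (ut x t) (Set.Ioc 0 T) t)
    (hux : ∀ x ∈ Set.Ioo x₀ x₁, ∀ t ∈ Set.Ioc (0:ℝ) T,
      HasDerivAt (fun y => u y t) (ux x t) x)
    (huxx : ∀ x ∈ Set.Ioo x₀ x₁, ∀ t ∈ Set.Ioc (0:ℝ) T,
      HasDerivAt (fun y => ux y t) (uxx x t) x)
    (hut_cont : ContinuousOn (fun z : ℝ × ℝ => ut z.1 z.2) (Set.Ioo x₀ x₁ ×ˢ Set.Ioc 0 T))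
    (hux_cont : ContinuousOn (fun z : ℝ × ℝ => ux z.1 z.2) (Set.Ioo x₀ x₁ ×ˢ Set.Ioc 0 T))
    (huxx_cont : ContinuousOn (fun z : ℝ × ℝ => uxx z.1 z.2) (Set.Ioo x₀ x₁ ×ˢ Set.Ioc 0 T))
    (hpde : ∀ x ∈ Set.Ioo x₀ x₁, ∀ t ∈ Set.Ioc (0:ℝ) T,
      ut x t = a (ux x t) (u x t) x t * uxx x t)
    (hinit : ∀ x ∈ Set.Icc x₀ x₁, u x 0 ≤ L * |x - h|)
    (hbdry : ∀ x ∈ ({x₀, x₁} : Set ℝ), ∀ t ∈ Set.Icc (0:ℝ) T, u x t ≤ L * |x - h|) :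
    ∀ x ∈ Set.Icc x₀ x₁, ∀ t ∈ Set.Ioc (0:ℝ) T,
      u x t ≤ L * (x - h) * erf ((x - h) / (2 * Real.sqrt (Λ * t)))
        + 2 * L * Real.sqrt (Λ * t / Real.pi) * Real.exp (-(x - h) ^ 2 / (4 * Λ * t)) := by
  have key : ∀ δ : ℝ, 0 < δ → ∀ x ∈ Icc x₀ x₁, ∀ t ∈ Icc (0:ℝ) T,
      u x t ≤ L * heatCone (x - h) (Λ * (t + δ)) + δ * t := by
    intro δ hδ
    have hτ : ∀ t, 0 ≤ t → 0 < Λ * (t + δ) := fun t ht => mul_pos hΛ (by linarith)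
    set w : ℝ × ℝ → ℝ := fun z =>
      u z.1 z.2 - (L * heatCone (z.1 - h) (Λ * (z.2 + δ)) + δ * z.2) with hw
    have hwc : ContinuousOn w (Icc x₀ x₁ ×ˢ Icc 0 T) := by
      have hV : ContinuousOn (fun z : ℝ × ℝ => heatCone (z.1 - h) (Λ * (z.2 + δ)))
          (Icc x₀ x₁ ×ˢ Icc 0 T) :=
        continuousOn_heatCone.comp
          (f := fun z : ℝ × ℝ => (z.1 - h, Λ * (z.2 + δ))) (by fun_prop)
          fun z hz => hτ z.2 hz.2.1
      exact hu_cont.sub ((hV.const_smul L).add (by fun_prop))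
    obtain ⟨⟨c, s⟩, ⟨hc, hs⟩, hmax⟩ := (isCompact_Icc.prod isCompact_Icc).exists_isMaxOn
      ⟨(x₀, 0), left_mem_Icc.2 hx.le, left_mem_Icc.2 hT.le⟩ hwc
    simp only at hc hs
    suffices hle : w (c, s) ≤ 0 by
      intro x hx' t ht
      have h1 := (hmax (show (x, t) ∈ Icc x₀ x₁ ×ˢ Icc 0 T from ⟨hx', ht⟩) : w (x, t) ≤ w (c, s))
      have h2 : w (x, t) ≤ 0 := h1.trans hle
      simp only [hw] at h2
      linarith
    have hcone : ∀ x t, 0 ≤ t →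
        L * |x - h| ≤ L * heatCone (x - h) (Λ * (t + δ)) + δ * t := fun x t ht => by
      have h1 := mul_le_mul_of_nonneg_left (abs_le_heatCone (x - h) (hτ t ht)) hL.le
      have h2 := mul_nonneg hδ.le ht
      linarith
    rcases hs.1.eq_or_lt with rfl | hs0
    · have := hinit c hc
      have := hcone c 0 le_rfl
      simp only [hw]
      linarith
    by_cases hcb : c ∈ ({x₀, x₁} : Set ℝ)
    · have := hbdry c hcb s hs
      have := hcone c s hs.1
      simp only [hw]
      linarith
    have hci : c ∈ Ioo x₀ x₁ := by
      simp only [mem_insert_iff, mem_singleton_iff, not_or] at hcb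
      exact ⟨lt_of_le_of_ne hc.1 (Ne.symm hcb.1), lt_of_le_of_ne hc.2 hcb.2⟩
    have hsi : s ∈ Ioc 0 T := ⟨hs0, hs.2⟩
    exfalso
    have hnhds : Ioo x₀ x₁ ∈ 𝓝 c := isOpen_Ioo.mem_nhds hci
    have hdx : ∀ y ∈ Ioo x₀ x₁, HasDerivAt (fun y => w (y, s))
        (ux y s - L * erf ((y - h) / (2 * √(Λ * (s + δ))))) y := fun y hy =>
      (hux y hy s hsi).sub
        ((((hasDerivAt_heatCone_space (y - h) (hτ s hs.1)).comp_sub_const y h).const_mul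
          L).add_const (δ * s))
    have hdxx : HasDerivAt (fun y => ux y s - L * erf ((y - h) / (2 * √(Λ * (s + δ)))))
        (uxx c s - L * heatConeCurvature (c - h) (Λ * (s + δ))) c :=
      (huxx c hci s hsi).sub
        (((hasDerivAt_erf_div (c - h) (hτ s hs.1)).comp_sub_const c h).const_mul L)
    have hdt : HasDerivWithinAt (fun t => w (c, t))
        (ut c s - (L * (heatConeCurvature (c - h) (Λ * (s + δ)) * Λ) + δ)) (Ioc 0 T) s := by
      have hin : HasDerivAt (fun t => Λ * (t + δ)) Λ s := by
        simpa using ((hasDerivAt_id s).add_const δ).const_mul Λ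
      have hlin : HasDerivAt (fun t => δ * t) δ s := by
        simpa using (hasDerivAt_id s).const_mul δ
      have hcomp := (hasDerivAt_heatCone_time (c - h) (hτ s hs.1)).comp s hin
      exact (hut c hci s hsi).sub ((hcomp.const_mul L).add hlin).hasDerivWithinAt
    have hloc : IsLocalMax (fun y => w (y, s)) c := by
      filter_upwards [hnhds] with y hy
      exact hmax (show (y, s) ∈ Icc x₀ x₁ ×ˢ Icc 0 T from ⟨Ioo_subset_Icc_self hy, hs⟩)
    have hgrad := hloc.hasDerivAt_eq_zero (hdx c hci)
    have hcurv := hloc.second_deriv_nonpos (eventually_of_mem hnhds hdx) hdxx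
    have htime := hdt.nonneg_of_forall_le_Ioc hsi fun t ht =>
      hmax (show (c, t) ∈ Icc x₀ x₁ ×ˢ Icc 0 T from ⟨hc, Ioc_subset_Icc_self ht⟩)
    have hslope : |ux c s| ≤ L := by
      rw [sub_eq_zero.1 hgrad, abs_mul, abs_of_pos hL]
      exact mul_le_of_le_one_right hL.le (abs_erf_le_one _)
    have hpos := ha_pos (ux c s) (u c s) c hc s hs
    have hub := ha_ub (ux c s) (u c s) c hc s hs hslope
    have hK := mul_nonneg hL.le (heatConeCurvature_nonneg (c - h) (Λ * (s + δ)))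
    rw [hpde c hci s hsi] at htime
    have h1 := mul_le_mul_of_nonneg_left (sub_nonpos.1 hcurv) hpos.le
    have h2 := mul_le_mul_of_nonneg_right hub hK
    linarith
  intro x hx' t ht
  have hform : L * (x - h) * erf ((x - h) / (2 * Real.sqrt (Λ * t)))
      + 2 * L * Real.sqrt (Λ * t / Real.pi) * Real.exp (-(x - h) ^ 2 / (4 * Λ * t))
      = L * heatCone (x - h) (Λ * t) := by
    have hsq : √(Λ * t) ^ 2 = Λ * t := Real.sq_sqrt (mul_pos hΛ ht.1).le
    have hexp : -((x - h) / (2 * √(Λ * t))) ^ 2 = -(x - h) ^ 2 / (4 * Λ * t) := by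
      rw [div_pow, mul_pow, hsq, neg_div]
      congr 2
      ring
    rw [heatCone, hexp, Real.sqrt_div (mul_pos hΛ ht.1).le]
    ring
  rw [hform]
  have hlim : Tendsto (fun δ => L * heatCone (x - h) (Λ * (t + δ)) + δ * t) (𝓝[>] 0)
      (𝓝 (L * heatCone (x - h) (Λ * t))) := by
    have hV : ContinuousAt (fun τ => heatCone (x - h) τ) (Λ * (t + 0)) :=
      (hasDerivAt_heatCone_time (x - h) (by simpa using mul_pos hΛ ht.1)).continuousAt
    have hin : ContinuousAt (fun δ : ℝ => Λ * (t + δ)) 0 := by fun_prop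
    have hcomp : ContinuousAt (fun δ => heatCone (x - h) (Λ * (t + δ))) 0 :=
      ContinuousAt.comp (f := fun δ : ℝ => Λ * (t + δ)) hV hin
    have hcont : ContinuousAt (fun δ => L * heatCone (x - h) (Λ * (t + δ)) + δ * t) 0 := by
      fun_prop
    simpa using hcont.tendsto.mono_left nhdsWithin_le_nhds
  refine ge_of_tendsto hlim ?_
  filter_upwards [self_mem_nhdsWithin] with δ hδ
  exact key δ hδ x hx' t (Ioc_subset_Icc_self ht)
end

section
/- Let n ≥ 1 and T, M > 0. Let A : ℝⁿ × [0,T] → ℝ^{n×n} be smooth with each A(p,t) symmetric and positive semidefinite, let b : ℝⁿ × [0,T] → ℝ be continuous, and define α(p,t) = |p|² · inf{ (vᵀA(p,t)v)/(v·p)² : v ∈ ℝⁿ, v·p ≠ 0 }. Suppose there is α̃ : (0,∞) → (0,∞) with α(p,t) = α̃(|p|) for all p ≠ 0 and all t ∈ [0,T]. Let u : ℝⁿ × [0,T] → ℝ be smooth, satisfy u_t = Σ_{i,j} A(Du,t)_{ij}·D_{ij}u + b(Du,t), be periodic with respect to some basis γ₁,…,γₙ of ℝⁿ (u(x+γₖ,t)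 = u(x,t) for every k), and satisfy osc_{x ∈ ℝⁿ} u(x,t) ≤ M for every t ∈ [0,T]. Let φ : [0,∞) × (0,∞) → ℝ be continuous, with continuous partial derivatives φ_t, φ_z, φ_{zz} and with φ_z > 0 on (0,∞) × (0,∞), satisfying φ_t = 4·α̃(|φ_z|)·φ_{zz} there and the barrier boundary conditions. Then for all x, y ∈ ℝⁿ and all t ∈ (0,T]: |u(y,t) − u(x,t)| ≤ M · φ(|y−x|/M, t/M²). -/
section Auxiliary

open Filter Topology Set

/-- The Euclidean distance on `Fin n → ℝ` (whose norm is the sup norm). -/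
noncomputable def euclDist {n : ℕ} (x y : Fin n → ℝ) : ℝ := √(∑ i, (y i - x i) ^ 2)

/-- The second derivative is nonpositive at a local maximum. -/
theorem second_deriv_nonpos_of_isLocalMax {g g' : ℝ → ℝ} {c : ℝ} (hmax : IsLocalMax g 0)
    (hg : ∀ᶠ s in 𝓝 0, HasDerivAt g (g' s) s) (hg' : HasDerivAt g' c 0) : c ≤ 0 := by
  by_contra! hc
  have h0 : g' 0 = 0 := hmax.hasDerivAt_eq_zero hg.self_of_nhds
  have hk : ∀ᶠ s in 𝓝 0,
      HasDerivAt (fun s => g s - c / 4 * s ^ 2) (g' s - c / 2 * s) s := by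
    filter_upwards [hg] with s hs
    refine (hs.fun_sub ((hasDerivAt_pow 2 s).const_mul (c / 4))).congr_deriv ?_
    push_cast; ring
  have hk1 : deriv (fun s => g s - c / 4 * s ^ 2) =ᶠ[𝓝 0] fun s => g' s - c / 2 * s := by
    filter_upwards [hk] with s hs using hs.deriv
  have hk2 : HasDerivAt (fun s => g' s - c / 2 * s) (c - c / 2) 0 := by
    simpa using hg'.fun_sub ((hasDerivAt_id' (0 : ℝ)).const_mul (c / 2))
  have hmin : IsLocalMin (fun s => g s - c / 4 * s ^ 2) 0 := by
    apply isLocalMin_of_deriv_deriv_pos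
    · rw [hk1.deriv_eq, hk2.deriv]; linarith
    · rw [hk1.self_of_nhds]; simp [h0]
    · exact hk.self_of_nhds.continuousAt
  have key : ∀ᶠ s in 𝓝 (0 : ℝ), s = 0 := by
    filter_upwards [hmin, hmax] with s h1 h2
    by_contra hs
    have : 0 < c / 4 * s ^ 2 := by positivity
    simp at h1 h2; linarith
  have := (key.filter_mono (nhdsWithin_le_nhds (s := {0}ᶜ))).and self_mem_nhdsWithin
  obtain ⟨s, h1, h2⟩ := this.exists
  exact h2 h1

/-- The trace pairing of a positive semidefinite matrix with a nonpositive quadratic form is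
nonpositive. -/
theorem sum_mul_nonpos_of_posSemidef {n : ℕ} {G H : Fin n → Fin n → ℝ}
    (hsymm : ∀ i j, G i j = G j i) (hpsd : ∀ v : Fin n → ℝ, 0 ≤ ∑ i, ∑ j, v i * G i j * v j)
    (hH : ∀ v : Fin n → ℝ, ∑ i, ∑ j, v i * v j * H i j ≤ 0) :
    ∑ i, ∑ j, G i j * H i j ≤ 0 := by
  have hP : (Matrix.of G).PosSemidef := by
    refine Matrix.PosSemidef.of_dotProduct_mulVec_nonneg ?_ fun v => ?_
    · ext i j; exact hsymm j i
    · refine (hpsd v).trans_eq ?_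
      simp [dotProduct, Matrix.mulVec, Finset.mul_sum, mul_assoc]
  obtain ⟨B, hB⟩ := (by open scoped MatrixOrder in
    exact CStarAlgebra.nonneg_iff_eq_star_mul_self.mp (Matrix.nonneg_iff_posSemidef.mpr hP))
  have hG : ∀ i j, G i j = ∑ k, B k i * B k j := fun i j => by
    have := congrFun (congrFun hB i) j
    simpa [Matrix.mul_apply, Matrix.star_eq_conjTranspose] using this
  calc ∑ i, ∑ j, G i j * H i j = ∑ k, ∑ i, ∑ j, B k i * B k j * H i j := by
        simp_rw [hG, Finset.sum_mul]
        rw [Finset.sum_comm (f := fun k i => ∑ j, B k i * B k j * H i j)]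
        exact Finset.sum_congr rfl fun i _ => Finset.sum_comm
    _ ≤ 0 := Finset.sum_nonpos fun k _ => hH (B k)

/-- If the quadratic form of `H` is nonpositive and at most `K` in the direction of `p`, then
`tr (A H)` is bounded by `K` times the least ellipticity of `A` in the direction of `p`. -/
theorem trace_le_of_directional_bounds {n : ℕ} {A H : Fin n → Fin n → ℝ} {p e : Fin n → ℝ}
    {r K : ℝ} (hsymm : ∀ i j, A i j = A j i)
    (hpsd : ∀ v : Fin n → ℝ, 0 ≤ ∑ i, ∑ j, v i * A i j * v j)
    (hp : ∀ i, p i = r * e i) (he : ∑ i, e i ^ 2 = 1)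
    (hH : ∀ v : Fin n → ℝ, ∑ i, ∑ j, v i * v j * H i j ≤ 0)
    (hK : ∑ i, ∑ j, e i * e j * H i j ≤ K) :
    ∑ i, ∑ j, A i j * H i j ≤ ((∑ i, p i ^ 2) *
        sInf {r : ℝ | ∃ v : Fin n → ℝ, (∑ i, v i * p i) ≠ 0 ∧
          r = (∑ i, ∑ j, v i * A i j * v j) / (∑ i, v i * p i) ^ 2}) * K := by
  set S := {r : ℝ | ∃ v : Fin n → ℝ, (∑ i, v i * p i) ≠ 0 ∧
          r = (∑ i, ∑ j, v i * A i j * v j) / (∑ i, v i * p i) ^ 2} with hS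
  have hS0 : ∀ s ∈ S, 0 ≤ s := by
    rintro s ⟨v, -, rfl⟩
    exact div_nonneg (hpsd v) (sq_nonneg _)
  have hI : 0 ≤ sInf S := Real.sInf_nonneg hS0
  set I := sInf S with hIdef
  have hG : ∑ i, ∑ j, (A i j - I * p i * p j) * H i j ≤ 0 := by
    refine sum_mul_nonpos_of_posSemidef (fun i j => by rw [hsymm i j]; ring) (fun v => ?_) hH
    have hexp : ∑ i, ∑ j, v i * (A i j - I * p i * p j) * v j =
        (∑ i, ∑ j, v i * A i j * v j) - I * (∑ i, v i * p i) ^ 2 := by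
      rw [sq, Finset.sum_mul_sum, Finset.mul_sum, ← Finset.sum_sub_distrib]
      refine Finset.sum_congr rfl fun i _ => ?_
      rw [Finset.mul_sum, ← Finset.sum_sub_distrib]
      exact Finset.sum_congr rfl fun j _ => by ring
    rw [hexp]
    by_cases hv : ∑ i, v i * p i = 0
    · simpa [hv] using hpsd v
    · have : I ≤ (∑ i, ∑ j, v i * A i j * v j) / (∑ i, v i * p i) ^ 2 :=
        csInf_le ⟨0, hS0⟩ ⟨v, hv, rfl⟩
      rw [le_div_iff₀ (by positivity)] at this
      linarith
  have hpp : ∑ i, p i ^ 2 = r ^ 2 := by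
    simp_rw [hp, mul_pow, ← Finset.mul_sum, he, mul_one]
  have hexp : ∑ i, ∑ j, (A i j - I * p i * p j) * H i j =
      (∑ i, ∑ j, A i j * H i j) - r ^ 2 * I * ∑ i, ∑ j, e i * e j * H i j := by
    rw [Finset.mul_sum, ← Finset.sum_sub_distrib]
    refine Finset.sum_congr rfl fun i _ => ?_
    rw [Finset.mul_sum, ← Finset.sum_sub_distrib]
    exact Finset.sum_congr rfl fun j _ => by rw [hp, hp]; ring
  have := mul_le_mul_of_nonneg_left hK (mul_nonneg (sq_nonneg r) hI)
  rw [hpp]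
  linarith

theorem hasDerivAt_line_of_partials {n : ℕ} {f : (Fin n → ℝ) → ℝ} {g : (Fin n → ℝ) → Fin n → ℝ}
    (hf : Differentiable ℝ f)
    (hg : ∀ x i, HasDerivAt (fun s : ℝ => f (x + s • (Pi.single i 1 : Fin n → ℝ))) (g x i) 0)
    (x v : Fin n → ℝ) (s : ℝ) :
    HasDerivAt (fun s : ℝ => f (x + s • v)) (∑ i, v i * g (x + s • v) i) s := by
  have hline : ∀ (x v : Fin n → ℝ) (s : ℝ),
      HasDerivAt (fun s : ℝ => f (x + s • v)) (fderiv ℝ f (x + s • v) v) s := fun x v s => by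
    have h : HasDerivAt (fun s : ℝ => x + s • v) v s := by
      simpa using ((hasDerivAt_id s).smul_const v).const_add x
    exact (hf _).hasFDerivAt.comp_hasDerivAt s h
  convert hline x v s using 1
  have hv := congrArg (fderiv ℝ f (x + s • v)) (pi_eq_sum_univ' v)
  rw [map_sum] at hv
  refine Eq.trans (Finset.sum_congr rfl fun i _ => ?_) hv.symm
  have h1 := (hline (x + s • v) (Pi.single i 1) 0).unique (hg (x + s • v) i)
  rw [map_smul, smul_eq_mul, ← h1, zero_smul, add_zero]

theorem differentiable_partial {n : ℕ} {f : (Fin n → ℝ) → ℝ} {g : (Fin n → ℝ) → Fin n → ℝ}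
    (hf : ContDiff ℝ 2 f)
    (hg : ∀ x i, HasDerivAt (fun s : ℝ => f (x + s • (Pi.single i 1 : Fin n → ℝ))) (g x i) 0)
    (i : Fin n) : Differentiable ℝ fun x => g x i := by
  have hd : Differentiable ℝ f := hf.differentiable (by norm_num)
  have h : (fun x => g x i) = fun x => fderiv ℝ f x (Pi.single i 1) := by
    funext x
    have h : HasDerivAt (fun s : ℝ => x + s • (Pi.single i 1 : Fin n → ℝ)) (Pi.single i 1) 0 := by
      simpa using ((hasDerivAt_id (0 : ℝ)).smul_const (Pi.single i 1 : Fin n → ℝ)).const_add x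
    have h2 := (hd (x + (0 : ℝ) • (Pi.single i 1 : Fin n → ℝ))).hasFDerivAt.comp_hasDerivAt 0 h
    simpa using (hg x i).unique h2
  rw [h]
  have : Differentiable ℝ (fderiv ℝ f) :=
    (hf.fderiv_right (m := 1) (by norm_num)).differentiable (by norm_num)
  exact this.clm_apply (differentiable_const _)

theorem hasDerivAt_line_second {n : ℕ} {f : (Fin n → ℝ) → ℝ} {g : (Fin n → ℝ) → Fin n → ℝ}
    {h : (Fin n → ℝ) → Fin n → Fin n → ℝ}
    (hf : ContDiff ℝ 2 f)
    (hg : ∀ x i, HasDerivAt (fun s : ℝ => f (x + s • (Pi.single i 1 : Fin n → ℝ))) (g x i) 0)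
    (hh : ∀ x i j,
      HasDerivAt (fun s : ℝ => g (x + s • (Pi.single i 1 : Fin n → ℝ)) j) (h x i j) 0)
    (x v : Fin n → ℝ) :
    HasDerivAt (fun s : ℝ => ∑ i, v i * g (x + s • v) i) (∑ i, ∑ j, v i * v j * h x i j) 0 := by
  have : HasDerivAt (fun s : ℝ => ∑ j, v j * g (x + s • v) j)
      (∑ j, v j * ∑ i, v i * h (x + (0 : ℝ) • v) i j) 0 :=
    HasDerivAt.fun_sum fun j _ => (hasDerivAt_line_of_partials (g := fun x i => h x i j)
      (differentiable_partial hf hg j) (fun x i => hh x i j) x v 0).const_mul (v j)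
  convert this using 1
  rw [Finset.sum_comm]
  refine Finset.sum_congr rfl fun j _ => ?_
  rw [Finset.mul_sum]
  exact Finset.sum_congr rfl fun i _ => by simp; ring

/-- Every point can be moved into a fixed ball by a lattice translation. -/
theorem exists_periodic_representative {n : ℕ} {γ : Fin n → Fin n → ℝ}
    (hγ : LinearIndependent ℝ γ) :
    ∃ R : ℝ, ∀ x : Fin n → ℝ, ∃ c : Fin n → ℝ, ‖x + c‖ ≤ R ∧
      ∀ f : (Fin n → ℝ) → ℝ, (∀ k z, f (z + γ k) = f z) → ∀ z, f (z + c) = f z := by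
  let b := basisOfLinearIndependentOfCardEqFinrank' γ hγ (by simp)
  have hb : ⇑b = γ := by simp [b]
  refine ⟨∑ i, ‖b i‖, fun x => ⟨-(ZSpan.floor b x : Fin n → ℝ), ?_, fun f hf => ?_⟩⟩
  · rw [← sub_eq_add_neg]
    exact ZSpan.norm_fract_le b x
  · have hmem : -(ZSpan.floor b x : Fin n → ℝ) ∈ Submodule.span ℤ (Set.range b) :=
      neg_mem (ZSpan.floor b x).2
    generalize -(ZSpan.floor b x : Fin n → ℝ) = c at hmem
    rw [hb] at hmem
    induction hmem using Submodule.span_induction with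
    | mem y hy => obtain ⟨k, rfl⟩ := hy; exact hf k
    | zero => simp
    | add y z _ _ hy hz => intro w; rw [← add_assoc, hz, hy]
    | smul m y _ hy =>
      have hm : ∀ z, f (z + m • y) = f z := by
        induction m using Int.induction_on with
        | zero => simp
        | succ k ih => intro z; rw [add_smul, one_smul, ← add_assoc, hy, ih]
        | pred k ih => intro z; rw [← hy, sub_smul, one_smul, add_assoc, sub_add_cancel, ih]
      exact hm

/-- First- and second-order conditions at a maximum of `f y - f x - ψ |y - x|` off the diagonal. -/
theorem two_point_maximum {n : ℕ} {f : (Fin n → ℝ) → ℝ} {g : (Fin n → ℝ) → Fin n → ℝ}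
    {h : (Fin n → ℝ) → Fin n → Fin n → ℝ} (hf : ContDiff ℝ 2 f)
    (hg : ∀ x i, HasDerivAt (fun s : ℝ => f (x + s • (Pi.single i 1 : Fin n → ℝ))) (g x i) 0)
    (hh : ∀ x i j,
      HasDerivAt (fun s : ℝ => g (x + s • (Pi.single i 1 : Fin n → ℝ)) j) (h x i j) 0)
    {ψ ψ' : ℝ → ℝ} {c : ℝ} {x y : Fin n → ℝ} (hd : 0 < euclDist x y)
    (hψ : ∀ z, 0 < z → HasDerivAt ψ (ψ' z) z) (hψ' : HasDerivAt ψ' c (euclDist x y))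
    (hmax : ∀ x' y', f y' - f x' - ψ (euclDist x' y') ≤ f y - f x - ψ (euclDist x y)) :
    ∃ e : Fin n → ℝ, ∑ i, e i ^ 2 = 1 ∧ (∀ i, g y i = ψ' (euclDist x y) * e i) ∧ g x = g y ∧
      (∀ v : Fin n → ℝ, ∑ i, ∑ j, v i * v j * (h y i j - h x i j) ≤ 0) ∧
      ∑ i, ∑ j, e i * e j * (h y i j - h x i j) ≤ 4 * c := by
  have hline := hasDerivAt_line_of_partials (hf.differentiable (by norm_num)) hg
  have hline2 := hasDerivAt_line_second hf hg hh
  have hsub : ∀ v : Fin n → ℝ, ∑ i, ∑ j, v i * v j * (h y i j - h x i j) =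
      (∑ i, ∑ j, v i * v j * h y i j) - ∑ i, ∑ j, v i * v j * h x i j := fun v => by
    simp_rw [mul_sub, Finset.sum_sub_distrib]
  have htrans : ∀ v, IsLocalMax (fun s : ℝ => f (y + s • v) - f (x + s • v)) 0 := fun v => by
    refine Eventually.of_forall fun s => ?_
    have := hmax (x + s • v) (y + s • v)
    simp only [euclDist, Pi.add_apply, add_sub_add_right_eq_sub] at this
    simp only [zero_smul, add_zero]
    linarith
  set d := euclDist x y with hddef
  have hsq : ∑ i, (y i - x i) ^ 2 = d ^ 2 :=
    (Real.sq_sqrt (Finset.sum_nonneg fun i _ => sq_nonneg _)).symm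
  let e : Fin n → ℝ := fun i => (y i - x i) / d
  have he : ∑ i, e i ^ 2 = 1 := by
    simp_rw [e, div_pow, ← Finset.sum_div, hsq]
    field_simp
  have hyx : ∀ i, y i - x i = d * e i := fun i => by simp only [e]; field_simp
  refine ⟨e, he, fun i => ?_, ?_, fun v => ?_, ?_⟩
  · have hdist : HasDerivAt (fun s : ℝ => euclDist x (y + s • (Pi.single i 1 : Fin n → ℝ)))
        (e i) 0 := by
      have h1 : HasDerivAt
          (fun s : ℝ => ∑ k, ((y + s • (Pi.single i 1 : Fin n → ℝ)) k - x k) ^ 2)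
          (∑ k, 2 * (y k - x k) * (Pi.single i 1 : Fin n → ℝ) k) 0 := by
        refine HasDerivAt.fun_sum fun k _ => ?_
        have := ((((hasDerivAt_id' (0 : ℝ)).mul_const ((Pi.single i 1 : Fin n → ℝ) k)).const_add
          (y k)).sub_const (x k)).fun_pow 2
        simpa using this
      have h2 := h1.sqrt (by simp [hsq, hd.ne'])
      refine h2.congr_deriv ?_
      have h3 : √(∑ k, (y k - x k) ^ 2) = d := rfl
      simp [Pi.single_apply, h3, e]
      field_simp
    have h0 : euclDist x (y + (0 : ℝ) • (Pi.single i 1 : Fin n → ℝ)) = d := by simp [hddef]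
    have h1 := (hg y i).fun_sub ((h0.symm ▸ hψ d hd).comp (0 : ℝ) hdist)
    have h2 : IsLocalMax (fun s : ℝ => f (y + s • (Pi.single i 1 : Fin n → ℝ)) -
        (ψ ∘ fun s : ℝ => euclDist x (y + s • (Pi.single i 1 : Fin n → ℝ))) s) 0 := by
      refine Eventually.of_forall fun s => ?_
      have := hmax x (y + s • (Pi.single i 1 : Fin n → ℝ))
      simp only [Function.comp, zero_smul, add_zero, ← hddef]
      linarith
    have h3 := h2.hasDerivAt_eq_zero h1
    rw [h0] at h3
    linarith
  · funext i
    have h1 := (htrans (Pi.single i 1)).hasDerivAt_eq_zero ((hg y i).fun_sub (hg x i))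
    linarith
  · rw [hsub]
    exact second_deriv_nonpos_of_isLocalMax (htrans v)
      (Eventually.of_forall fun s => (hline y v s).fun_sub (hline x v s))
      ((hline2 y v).fun_sub (hline2 x v))
  · have hpos : ∀ᶠ s in 𝓝 (0 : ℝ), 0 < d + 2 * s := by
      have : ContinuousAt (fun s : ℝ => d + 2 * s) 0 := by fun_prop
      exact this.eventually (lt_mem_nhds (by simpa using hd))
    have hdist : ∀ s, 0 < d + 2 * s → euclDist (x + s • -e) (y + s • e) = d + 2 * s := by
      intro s hs
      have : ∀ i, (y + s • e) i - (x + s • -e) i = (d + 2 * s) * e i := fun i => by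
        simp only [Pi.add_apply, Pi.smul_apply, Pi.neg_apply, smul_eq_mul]
        linear_combination hyx i
      simp only [euclDist, this, mul_pow, ← Finset.mul_sum, he, mul_one]
      exact Real.sqrt_sq hs.le
    have hlin : ∀ s : ℝ, HasDerivAt (fun s : ℝ => d + 2 * s) 2 s := fun s => by
      simpa using ((hasDerivAt_id' s).const_mul 2).const_add d
    have hm : IsLocalMax (fun s : ℝ => f (y + s • e) - f (x + s • -e) - ψ (d + 2 * s)) 0 := by
      filter_upwards [hpos] with s hs
      have := hmax (x + s • -e) (y + s • e)
      rw [hdist s hs] at this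
      simpa using this
    have hd0 : d = d + 2 * (0 : ℝ) := by simp
    have := second_deriv_nonpos_of_isLocalMax hm
      (hpos.mono fun s hs => ((hline y e s).fun_sub (hline x (-e) s)).fun_sub
        ((hψ _ hs).comp s (hlin s)))
      (((hline2 y e).fun_sub (hline2 x (-e))).fun_sub
        (((hd0 ▸ hψ').comp (0 : ℝ) (hlin 0)).mul_const 2))
    simp only [Pi.neg_apply, neg_mul_neg] at this
    rw [hsub]
    linarith

theorem HasDerivWithinAt.nonneg_of_le_left {f : ℝ → ℝ} {f' a b : ℝ} (hab : a < b)
    (hf : HasDerivWithinAt f f' (Ioo a b) b) (hle : ∀ s ∈ Ioo a b, f s ≤ f b) : 0 ≤ f' := by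
  have h := hasDerivWithinAt_iff_tendsto_slope.1 hf
  rw [sdiff_singleton_eq_self (by simp), nhdsWithin_Ioo_eq_nhdsLT hab] at h
  refine ge_of_tendsto h ?_
  filter_upwards [Ioo_mem_nhdsLT hab] with s hs
  rw [slope_def_field]
  exact div_nonneg_of_nonpos (by linarith [hle s hs]) (by linarith [hs.2])

theorem euclDist_self {n : ℕ} (x : Fin n → ℝ) : euclDist x x = 0 := by simp [euclDist]

theorem euclDist_nonneg {n : ℕ} (x y : Fin n → ℝ) : 0 ≤ euclDist x y := Real.sqrt_nonneg _

theorem euclDist_comm {n : ℕ} (x y : Fin n → ℝ) : euclDist x y = euclDist y x := by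
  simp only [euclDist, ← neg_sub (y _) (x _), neg_sq]

theorem norm_sub_le_euclDist {n : ℕ} (x y : Fin n → ℝ) : ‖y - x‖ ≤ euclDist x y := by
  refine (pi_norm_le_iff_of_nonneg (euclDist_nonneg x y)).2 fun i => ?_
  rw [Real.norm_eq_abs]
  exact Real.abs_le_sqrt (Finset.single_le_sum (f := fun i => (y i - x i) ^ 2)
    (fun i _ => sq_nonneg _) (Finset.mem_univ i))

theorem continuous_euclDist {n : ℕ} :
    Continuous fun q : (Fin n → ℝ) × (Fin n → ℝ) => euclDist q.1 q.2 := by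
  unfold euclDist; fun_prop

/-- Every pair of points can be moved into a fixed ball by lattice translations without increasing
its distance. -/
theorem exists_periodic_pair_representative {n : ℕ} {γ : Fin n → Fin n → ℝ}
    (hγ : LinearIndependent ℝ γ) :
    ∃ P : ℝ, ∀ x y : Fin n → ℝ, ∃ x' ∈ Metric.closedBall (0 : Fin n → ℝ) P,
      ∃ y' ∈ Metric.closedBall (0 : Fin n → ℝ) P, euclDist x' y' ≤ euclDist x y ∧
      ∀ f : (Fin n → ℝ) → ℝ, (∀ k z, f (z + γ k) = f z) → f x' = f x ∧ f y' = f y := by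
  obtain ⟨R, hR⟩ := exists_periodic_representative hγ
  obtain ⟨D, hD⟩ := ((isCompact_closedBall (0 : Fin n → ℝ) R).prod
    (isCompact_closedBall (0 : Fin n → ℝ) R)).bddAbove_image
      (continuous_euclDist (n := n)).continuousOn
  refine ⟨R + |D|, fun x y => ?_⟩
  obtain ⟨c, hc, hcf⟩ := hR x
  have hx : ‖x + c‖ ≤ R + |D| := by linarith [abs_nonneg D]
  by_cases hxy : euclDist x y ≤ D
  · refine ⟨x + c, by simpa using hx, y + c, ?_, by simp [euclDist], fun f hf =>
      ⟨hcf f hf x, hcf f hf y⟩⟩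
    have h1 : y + c = (x + c) + (y - x) := by abel
    rw [mem_closedBall_zero_iff, h1]
    linarith [norm_add_le (x + c) (y - x), norm_sub_le_euclDist x y, le_abs_self D]
  · obtain ⟨c', hc', hcf'⟩ := hR y
    refine ⟨x + c, by simpa using hx, y + c', ?_, ?_, fun f hf => ⟨hcf f hf x, hcf' f hf y⟩⟩
    · simp only [mem_closedBall_zero_iff]; linarith [abs_nonneg D]
    · exact (hD ⟨(x + c, y + c'), by simp [hc, hc'], rfl⟩).trans (not_le.1 hxy).le

/-- One-sided modulus-of-continuity estimate by a barrier `Φ` solving `Φ_t = 4 α̃(Φ_z) Φ_zz`. -/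
theorem sub_le_barrier_of_periodic {n : ℕ} {T M : ℝ}
    {A : (Fin n → ℝ) → ℝ → Fin n → Fin n → ℝ}
    (hA_symm : ∀ p : Fin n → ℝ, ∀ t ∈ Icc (0:ℝ) T, ∀ i j, A p t i j = A p t j i)
    (hA_psd : ∀ p : Fin n → ℝ, ∀ t ∈ Icc (0:ℝ) T, ∀ v : Fin n → ℝ,
      0 ≤ ∑ i, ∑ j, v i * A p t i j * v j)
    {b : (Fin n → ℝ) → ℝ → ℝ} {αt : ℝ → ℝ}
    (hα : ∀ p : Fin n → ℝ, p ≠ 0 → ∀ t ∈ Icc (0:ℝ) T,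
      (∑ i, p i ^ 2) *
        sInf {r : ℝ | ∃ v : Fin n → ℝ, (∑ i, v i * p i) ≠ 0 ∧
          r = (∑ i, ∑ j, v i * A p t i j * v j) / (∑ i, v i * p i) ^ 2}
        = αt (Real.sqrt (∑ i, p i ^ 2)))
    {u ut : (Fin n → ℝ) → ℝ → ℝ} {gu : (Fin n → ℝ) → ℝ → Fin n → ℝ}
    {hu : (Fin n → ℝ) → ℝ → Fin n → Fin n → ℝ}
    (hu_smooth : ContDiffOn ℝ 2 (fun z : (Fin n → ℝ) × ℝ => u z.1 z.2) (univ ×ˢ Icc 0 T))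
    (hut : ∀ x : Fin n → ℝ, ∀ t ∈ Icc (0:ℝ) T,
      HasDerivWithinAt (fun s => u x s) (ut x t) (Icc 0 T) t)
    (hgu : ∀ x : Fin n → ℝ, ∀ t ∈ Icc (0:ℝ) T, ∀ i,
      HasDerivAt (fun s : ℝ => u (x + s • (Pi.single i 1 : Fin n → ℝ)) t) (gu x t i) 0)
    (hhu : ∀ x : Fin n → ℝ, ∀ t ∈ Icc (0:ℝ) T, ∀ i j,
      HasDerivAt (fun s : ℝ => gu (x + s • (Pi.single i 1 : Fin n → ℝ)) t j) (hu x t i j) 0)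
    (hpde : ∀ x : Fin n → ℝ, ∀ t ∈ Icc (0:ℝ) T,
      ut x t = (∑ i, ∑ j, A (gu x t) t i j * hu x t i j) + b (gu x t) t)
    {γ : Fin n → Fin n → ℝ} (hγ : LinearIndependent ℝ γ)
    (hper : ∀ k : Fin n, ∀ x : Fin n → ℝ, ∀ t : ℝ, u (x + γ k) t = u x t)
    (hosc : ∀ t ∈ Icc (0:ℝ) T, ∀ x y : Fin n → ℝ, u x t - u y t ≤ M)
    {Φ Φt Φz Φzz : ℝ → ℝ → ℝ}
    (hΦ_cont : ContinuousOn (fun z : ℝ × ℝ => Φ z.1 z.2) (Ici 0 ×ˢ Ioi 0))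
    (hΦt : ∀ z, 0 < z → ∀ t, 0 < t → HasDerivAt (fun s => Φ z s) (Φt z t) t)
    (hΦz : ∀ z, 0 < z → ∀ t, 0 < t → HasDerivAt (fun w => Φ w t) (Φz z t) z)
    (hΦzz : ∀ z, 0 < z → ∀ t, 0 < t → HasDerivAt (fun w => Φz w t) (Φzz z t) z)
    (hΦz_pos : ∀ z, 0 < z → ∀ t, 0 < t → 0 < Φz z t)
    (hΦpde : ∀ z, 0 < z → ∀ t, 0 < t → Φt z t = 4 * αt (Φz z t) * Φzz z t)
    (hbc1 : ∀ z : ℝ, 0 < z → Tendsto (fun t => Φ z t) (𝓝[>] 0) (𝓝 M))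
    (hbc2 : ∀ t : ℝ, 0 < t → Φ 0 t = 0) :
    ∀ x y : Fin n → ℝ, ∀ t ∈ Ioc (0:ℝ) T, u y t - u x t ≤ Φ (euclDist x y) t := by
  have hmono : ∀ t, 0 < t → MonotoneOn (fun z => Φ z t) (Ici 0) := fun t ht => by
    refine monotoneOn_of_deriv_nonneg (convex_Ici 0) ?_ ?_ ?_
    · exact hΦ_cont.comp (by fun_prop : ContinuousOn (fun z : ℝ => (z, t)) (Ici 0))
        fun z hz => ⟨hz, ht⟩
    · rw [interior_Ici]
      exact fun z hz => (hΦz z hz t ht).differentiableAt.differentiableWithinAt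
    · rw [interior_Ici]
      exact fun z hz => (hΦz z hz t ht).deriv ▸ (hΦz_pos z hz t ht).le
  have hΦ_nonneg : ∀ z, 0 ≤ z → ∀ t, 0 < t → 0 ≤ Φ z t := fun z hz t ht => by
    simpa [hbc2 t ht] using hmono t ht self_mem_Ici hz hz
  intro x y t ht
  by_contra! hlt
  obtain ⟨P, hP⟩ := exists_periodic_pair_representative hγ
  have hT : 0 < T := ht.1.trans_le ht.2
  obtain ⟨ε, hε, hεlt⟩ : ∃ ε : ℝ, 0 < ε ∧ ε * (1 + T) < u y t - u x t - Φ (euclDist x y) t := by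
    refine ⟨(u y t - u x t - Φ (euclDist x y) t) / (2 * (1 + T)), div_pos (by linarith)
      (by positivity), ?_⟩
    rw [div_mul_eq_mul_div, div_lt_iff₀ (by positivity)]
    nlinarith
  set W : (Fin n → ℝ) → (Fin n → ℝ) → ℝ → ℝ := fun x y t =>
    u y t - u x t - Φ (euclDist x y) t - ε * (1 + t) with hW
  have hWpos : 0 < W x y t := by
    simp only [hW]
    nlinarith [ht.2]
  have hdom : ∀ x y, ∃ x' ∈ Metric.closedBall (0 : Fin n → ℝ) P,
      ∃ y' ∈ Metric.closedBall (0 : Fin n → ℝ) P, ∀ t, 0 < t → W x y t ≤ W x' y' t := by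
    intro x y
    obtain ⟨x', hx', y', hy', hle, heq⟩ := hP x y
    refine ⟨x', hx', y', hy', fun t ht => ?_⟩
    obtain ⟨h1, h2⟩ := heq (fun z => u z t) fun k z => hper k z t
    have := hmono t ht (euclDist_nonneg x' y') (euclDist_nonneg x y) hle
    simp only [hW] at h1 h2 this ⊢
    linarith
  have hu_cont : ContinuousOn (fun z : (Fin n → ℝ) × ℝ => u z.1 z.2) (univ ×ˢ Icc 0 T) :=
    hu_smooth.continuousOn
  set B := Metric.closedBall (0 : Fin n → ℝ) P with hB
  have hBc : IsCompact B := isCompact_closedBall _ _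
  have hinit : ∃ τ, 0 < τ ∧ ∀ s ∈ Ioc 0 τ, s ≤ T → ∀ x ∈ B, ∀ y ∈ B, W x y s ≤ 0 := by
    have huc := (hBc.prod isCompact_Icc).uniformContinuousOn_of_continuous
      (hu_cont.mono (prod_mono (subset_univ B) subset_rfl))
    obtain ⟨δ, hδ, hδu⟩ := Metric.uniformContinuousOn_iff.1 huc ε hε
    have hev : ∀ᶠ s in 𝓝[>] (0 : ℝ), M - ε < Φ (δ / 2) s :=
      (hbc1 (δ / 2) (by positivity)).eventually (lt_mem_nhds (by linarith))
    obtain ⟨τ, hτ, hτs⟩ := mem_nhdsGT_iff_exists_Ioc_subset.1 hev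
    refine ⟨τ, hτ, fun s hs hsT x hx y hy => ?_⟩
    have hs0 : 0 < s := hs.1
    have hεs : 0 < ε * s := by positivity
    simp only [hW]
    rcases le_total (euclDist x y) (δ / 2) with hxy | hxy
    · have h1 := hδu (y, s) ⟨hy, hs0.le, hsT⟩ (x, s) ⟨hx, hs0.le, hsT⟩ (by
        simp only [Prod.dist_eq, dist_self, dist_eq_norm y x, max_lt_iff]
        exact ⟨by linarith [norm_sub_le_euclDist x y], hδ⟩)
      rw [Real.dist_eq] at h1
      have h2 := (le_abs_self _).trans_lt h1
      have h3 := hΦ_nonneg _ (euclDist_nonneg x y) s hs0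
      simp only at h2
      linarith
    · have h1 : M - ε < Φ (δ / 2) s := hτs hs
      have h2 := hmono s hs0 (by positivity : (0 : ℝ) ≤ δ / 2) (euclDist_nonneg x y) hxy
      have h3 := hosc s ⟨hs0.le, hsT⟩ y x
      simp only at h2
      linarith
  obtain ⟨τ, hτ, hWτ⟩ := hinit
  obtain ⟨x₁, hx₁, y₁, hy₁, hle₁⟩ := hdom x y
  have hτt : τ < t := by
    by_contra! h
    linarith [hWτ t ⟨ht.1, h⟩ ht.2 x₁ hx₁ y₁ hy₁, hle₁ t ht.1]
  have hWcont : ContinuousOn (fun q : ((Fin n → ℝ) × (Fin n → ℝ)) × ℝ => W q.1.1 q.1.2 q.2)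
      ((B ×ˢ B) ×ˢ Icc τ T) := by
    have hmem : ∀ q ∈ (B ×ˢ B) ×ˢ Icc τ T, q.2 ∈ Icc 0 T ∧ 0 < q.2 := fun q hq =>
      ⟨⟨hτ.le.trans hq.2.1, hq.2.2⟩, hτ.trans_le hq.2.1⟩
    have h1 : ContinuousOn (fun q : ((Fin n → ℝ) × (Fin n → ℝ)) × ℝ => u q.1.1 q.2)
        ((B ×ˢ B) ×ˢ Icc τ T) :=
      hu_cont.comp (by fun_prop : ContinuousOn
        (fun q : ((Fin n → ℝ) × (Fin n → ℝ)) × ℝ => (q.1.1, q.2)) _)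
        fun q hq => ⟨mem_univ _, (hmem q hq).1⟩
    have h2 : ContinuousOn (fun q : ((Fin n → ℝ) × (Fin n → ℝ)) × ℝ => u q.1.2 q.2)
        ((B ×ˢ B) ×ˢ Icc τ T) :=
      hu_cont.comp (by fun_prop : ContinuousOn
        (fun q : ((Fin n → ℝ) × (Fin n → ℝ)) × ℝ => (q.1.2, q.2)) _)
        fun q hq => ⟨mem_univ _, (hmem q hq).1⟩
    have h3 : ContinuousOn
        (fun q : ((Fin n → ℝ) × (Fin n → ℝ)) × ℝ => Φ (euclDist q.1.1 q.1.2) q.2)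
        ((B ×ˢ B) ×ˢ Icc τ T) :=
      hΦ_cont.comp ((continuous_euclDist.comp continuous_fst).prodMk continuous_snd).continuousOn
        fun q hq => ⟨euclDist_nonneg _ _, (hmem q hq).2⟩
    exact ((h2.sub h1).sub h3).sub (by fun_prop)
  obtain ⟨⟨⟨x₀, y₀⟩, t₀⟩, ⟨⟨hx₀, hy₀⟩, ht₀⟩, hmax⟩ :=
    ((hBc.prod hBc).prod isCompact_Icc).exists_isMaxOn
      ⟨((x₁, y₁), t), ⟨hx₁, hy₁⟩, hτt.le, ht.2⟩ hWcont
  change t₀ ∈ Icc τ T at ht₀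
  have ht₀pos : 0 < t₀ := hτ.trans_le ht₀.1
  have ht₀Icc : t₀ ∈ Icc 0 T := ⟨ht₀pos.le, ht₀.2⟩
  have hglob : ∀ x y, ∀ s ∈ Icc τ T, W x y s ≤ W x₀ y₀ t₀ := fun x y s hs => by
    obtain ⟨x', hx', y', hy', hle⟩ := hdom x y
    exact (hle s (hτ.trans_le hs.1)).trans
      (hmax (show ((x', y'), s) ∈ (B ×ˢ B) ×ˢ Icc τ T from ⟨⟨hx', hy'⟩, hs⟩))
  have hW₀ : 0 < W x₀ y₀ t₀ := hWpos.trans_le (hglob x y t ⟨hτt.le, ht.2⟩)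
  have hτt₀ : τ < t₀ := by
    by_contra! h
    linarith [hWτ t₀ ⟨ht₀pos, h⟩ ht₀.2 x₀ hx₀ y₀ hy₀]
  have hd : 0 < euclDist x₀ y₀ := by
    refine (euclDist_nonneg _ _).lt_of_ne fun h => ?_
    have hxy : ‖y₀ - x₀‖ ≤ 0 := h ▸ norm_sub_le_euclDist x₀ y₀
    have hxy : y₀ = x₀ := sub_eq_zero.1 (norm_le_zero_iff.1 hxy)
    have : 0 < ε * (1 + t₀) := by positivity
    simp only [hW, hxy, euclDist_self, hbc2 t₀ ht₀pos] at hW₀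
    linarith
  set d := euclDist x₀ y₀ with hddef
  have hf : ContDiff ℝ 2 fun x => u x t₀ := by
    rw [← contDiffOn_univ]
    exact hu_smooth.comp (by fun_prop : ContDiffOn ℝ 2 (fun x : Fin n → ℝ => (x, t₀)) univ)
      fun x _ => ⟨mem_univ _, ht₀Icc⟩
  obtain ⟨e, he, hgy, hgx, hH, hK⟩ := two_point_maximum hf
    (g := fun x => gu x t₀) (h := fun x => hu x t₀) (fun x i => hgu x t₀ ht₀Icc i)
    (fun x i j => hhu x t₀ ht₀Icc i j) (ψ := fun z => Φ z t₀) (ψ' := fun z => Φz z t₀) hd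
    (fun z hz => hΦz z hz t₀ ht₀pos) (hΦzz d hd t₀ ht₀pos) fun x' y' => by
      have := hglob x' y' t₀ ht₀
      simp only [hW] at this
      linarith
  rw [← hddef] at hgy
  have hr : 0 < Φz d t₀ := hΦz_pos d hd t₀ ht₀pos
  have hpp : ∑ i, gu y₀ t₀ i ^ 2 = Φz d t₀ ^ 2 := by
    simp_rw [hgy, mul_pow, ← Finset.mul_sum, he, mul_one]
  have hp : gu y₀ t₀ ≠ 0 := fun h => by
    simp only [h, Pi.zero_apply, ne_eq, OfNat.ofNat_ne_zero, not_false_eq_true, zero_pow,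
      Finset.sum_const_zero] at hpp
    exact (pow_pos hr 2).ne hpp
  have htrace := trace_le_of_directional_bounds (hA_symm (gu y₀ t₀) t₀ ht₀Icc)
    (hA_psd (gu y₀ t₀) t₀ ht₀Icc) hgy he hH hK
  rw [hα _ hp t₀ ht₀Icc, hpp, Real.sqrt_sq hr.le] at htrace
  have hdiff : ut y₀ t₀ - ut x₀ t₀ =
      ∑ i, ∑ j, A (gu y₀ t₀) t₀ i j * (hu y₀ t₀ i j - hu x₀ t₀ i j) := by
    rw [hpde _ _ ht₀Icc, hpde _ _ ht₀Icc, hgx]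
    simp_rw [mul_sub, Finset.sum_sub_distrib]
    ring
  have hderiv : HasDerivWithinAt (fun s => W x₀ y₀ s)
      (ut y₀ t₀ - ut x₀ t₀ - Φt d t₀ - ε * 1) (Ioo τ t₀) t₀ := by
    have hsub : Ioo τ t₀ ⊆ Icc 0 T := fun s hs => ⟨(hτ.trans hs.1).le, hs.2.le.trans ht₀.2⟩
    exact ((((hut y₀ t₀ ht₀Icc).mono hsub).fun_sub ((hut x₀ t₀ ht₀Icc).mono hsub)).fun_sub
      (hΦt d hd t₀ ht₀pos).hasDerivWithinAt).fun_sub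
      (((hasDerivWithinAt_id t₀ _).const_add 1).const_mul ε)
  have := hderiv.nonneg_of_le_left hτt₀ fun s hs =>
    hglob x₀ y₀ s ⟨hs.1.le, hs.2.le.trans ht₀.2⟩
  rw [hdiff, hΦpde d hd t₀ ht₀pos] at this
  linarith

end Auxiliary

/-- Modulus-of-continuity estimate for periodic solutions of
`u_t = Σ A(Du,t)_{ij} D_{ij}u + b(Du,t)` in higher dimensions, via a barrier for
the reduced one-dimensional equation `φ_t = 4 α̃(|φ_z|) φ_{zz}`. -/
theorem periodic_modulus_estimate_higher_dim
    (n : ℕ) (hn : 1 ≤ n) (T M : ℝ) (hT : 0 < T) (hM : 0 < M)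
    (A : (Fin n → ℝ) → ℝ → Fin n → Fin n → ℝ)
    (hA_smooth : ∀ i j : Fin n,
      ContDiffOn ℝ (⊤ : ℕ∞) (fun z : (Fin n → ℝ) × ℝ => A z.1 z.2 i j)
        (Set.univ ×ˢ Set.Icc 0 T))
    (hA_symm : ∀ p : Fin n → ℝ, ∀ t ∈ Set.Icc (0:ℝ) T, ∀ i j, A p t i j = A p t j i)
    (hA_psd : ∀ p : Fin n → ℝ, ∀ t ∈ Set.Icc (0:ℝ) T, ∀ v : Fin n → ℝ,
      0 ≤ ∑ i, ∑ j, v i * A p t i j * v j)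
    (b : (Fin n → ℝ) → ℝ → ℝ)
    (hb_cont : ContinuousOn (fun z : (Fin n → ℝ) × ℝ => b z.1 z.2)
      (Set.univ ×ˢ Set.Icc 0 T))
    (αt : ℝ → ℝ) (hαt_pos : ∀ s : ℝ, 0 < s → 0 < αt s)
    (hα : ∀ p : Fin n → ℝ, p ≠ 0 → ∀ t ∈ Set.Icc (0:ℝ) T,
      (∑ i, p i ^ 2) *
        sInf {r : ℝ | ∃ v : Fin n → ℝ, (∑ i, v i * p i) ≠ 0 ∧
          r = (∑ i, ∑ j, v i * A p t i j * v j) / (∑ i, v i * p i) ^ 2}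
        = αt (Real.sqrt (∑ i, p i ^ 2)))
    (u ut : (Fin n → ℝ) → ℝ → ℝ)
    (gu : (Fin n → ℝ) → ℝ → Fin n → ℝ)
    (hu : (Fin n → ℝ) → ℝ → Fin n → Fin n → ℝ)
    (hu_smooth : ContDiffOn ℝ (⊤ : ℕ∞) (fun z : (Fin n → ℝ) × ℝ => u z.1 z.2)
      (Set.univ ×ˢ Set.Icc 0 T))
    (hut : ∀ x : Fin n → ℝ, ∀ t ∈ Set.Icc (0:ℝ) T,
      HasDerivWithinAt (fun s => u x s) (ut x t) (Set.Icc 0 T) t)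
    (hgu : ∀ x : Fin n → ℝ, ∀ t ∈ Set.Icc (0:ℝ) T, ∀ i,
      HasDerivAt (fun s : ℝ => u (x + s • (Pi.single i 1 : Fin n → ℝ)) t) (gu x t i) 0)
    (hhu : ∀ x : Fin n → ℝ, ∀ t ∈ Set.Icc (0:ℝ) T, ∀ i j,
      HasDerivAt (fun s : ℝ => gu (x + s • (Pi.single i 1 : Fin n → ℝ)) t j) (hu x t i j) 0)
    (hpde : ∀ x : Fin n → ℝ, ∀ t ∈ Set.Icc (0:ℝ) T,
      ut x t = (∑ i, ∑ j, A (gu x t) t i j * hu x t i j) + b (gu x t) t)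
    (γ : Fin n → Fin n → ℝ) (hγ : LinearIndependent ℝ γ)
    (hper : ∀ k : Fin n, ∀ x : Fin n → ℝ, ∀ t : ℝ, u (x + γ k) t = u x t)
    (hosc : ∀ t ∈ Set.Icc (0:ℝ) T, ∀ x y : Fin n → ℝ, u x t - u y t ≤ M)
    (φ φt φz φzz : ℝ → ℝ → ℝ)
    (hφ_cont : ContinuousOn (fun z : ℝ × ℝ => φ z.1 z.2) (Set.Ici 0 ×ˢ Set.Ioi 0))
    (hφt : ∀ z ∈ Set.Ioi (0:ℝ), ∀ t ∈ Set.Ioi (0:ℝ), HasDerivAt (fun s => φ z s) (φt z t) t)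
    (hφz : ∀ z ∈ Set.Ioi (0:ℝ), ∀ t ∈ Set.Ioi (0:ℝ), HasDerivAt (fun w => φ w t) (φz z t) z)
    (hφzz : ∀ z ∈ Set.Ioi (0:ℝ), ∀ t ∈ Set.Ioi (0:ℝ), HasDerivAt (fun w => φz w t) (φzz z t) z)
    (hφt_cont : ContinuousOn (fun z : ℝ × ℝ => φt z.1 z.2) (Set.Ioi 0 ×ˢ Set.Ioi 0))
    (hφz_cont : ContinuousOn (fun z : ℝ × ℝ => φz z.1 z.2) (Set.Ioi 0 ×ˢ Set.Ioi 0))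
    (hφzz_cont : ContinuousOn (fun z : ℝ × ℝ => φzz z.1 z.2) (Set.Ioi 0 ×ˢ Set.Ioi 0))
    (hφz_pos : ∀ z ∈ Set.Ioi (0:ℝ), ∀ t ∈ Set.Ioi (0:ℝ), 0 < φz z t)
    (hφpde : ∀ z ∈ Set.Ioi (0:ℝ), ∀ t ∈ Set.Ioi (0:ℝ),
      φt z t = 4 * αt |φz z t| * φzz z t)
    (hbc1 : ∀ z : ℝ, 0 < z →
      Filter.Tendsto (fun t => φ z t) (nhdsWithin 0 (Set.Ioi 0)) (nhds 1))
    (hbc2 : ∀ t : ℝ, 0 < t → φ 0 t = 0)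
    (hbc3 : ∀ t : ℝ, 0 < t →
      Filter.Tendsto (fun z => φ z t) Filter.atTop (nhds 1)) :
    ∀ x y : Fin n → ℝ, ∀ t ∈ Set.Ioc (0:ℝ) T,
      |u y t - u x t| ≤
        M * φ (Real.sqrt (∑ i, (y i - x i) ^ 2) / M) (t / M ^ 2) := by
  have hM2 : 0 < M ^ 2 := by positivity
  have hΦ := sub_le_barrier_of_periodic (M := M) hA_symm hA_psd hα
    (hu_smooth.of_le (WithTop.coe_le_coe.2 (le_top : (2 : ℕ∞) ≤ ⊤))) hut hgu hhu hpde hγ hper hosc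
    (Φ := fun z t => M * φ (z / M) (t / M ^ 2)) (Φt := fun z t => φt (z / M) (t / M ^ 2) / M)
    (Φz := fun z t => φz (z / M) (t / M ^ 2)) (Φzz := fun z t => φzz (z / M) (t / M ^ 2) / M)
    (continuousOn_const.mul (hφ_cont.comp (by fun_prop : ContinuousOn
      (fun q : ℝ × ℝ => (q.1 / M, q.2 / M ^ 2)) _)
      fun q hq => ⟨div_nonneg hq.1 hM.le, div_pos (Set.mem_Ioi.1 hq.2) hM2⟩))
    (fun z hz t ht => by
      have h := ((hφt (z / M) (div_pos hz hM) (t / M ^ 2) (div_pos ht hM2)).comp t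
        ((hasDerivAt_id' t).div_const (M ^ 2))).const_mul M
      refine h.congr_deriv ?_
      field_simp)
    (fun z hz t ht => by
      have h := ((hφz (z / M) (div_pos hz hM) (t / M ^ 2) (div_pos ht hM2)).comp z
        ((hasDerivAt_id' z).div_const M)).const_mul M
      refine h.congr_deriv ?_
      field_simp)
    (fun z hz t ht => by
      have h := (hφzz (z / M) (div_pos hz hM) (t / M ^ 2) (div_pos ht hM2)).comp z
        ((hasDerivAt_id' z).div_const M)
      refine h.congr_deriv ?_
      field_simp)
    (fun z hz t ht => hφz_pos _ (div_pos hz hM) _ (div_pos ht hM2))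
    (fun z hz t ht => by
      have hz' : 0 < z / M := div_pos hz hM
      have ht' : 0 < t / M ^ 2 := div_pos ht hM2
      have h := hφpde _ hz' _ ht'
      rw [abs_of_pos (hφz_pos _ hz' _ ht')] at h
      simp only [h]
      ring)
    (fun z hz => by
      have hlim : Filter.Tendsto (fun t : ℝ => t / M ^ 2) (nhdsWithin 0 (Set.Ioi 0))
          (nhdsWithin 0 (Set.Ioi 0)) := by
        refine tendsto_nhdsWithin_iff.2 ⟨?_, ?_⟩
        · have : Continuous fun t : ℝ => t / M ^ 2 := by fun_prop
          simpa using (this.tendsto 0).mono_left nhdsWithin_le_nhds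
        · filter_upwards [self_mem_nhdsWithin] with t ht using div_pos (Set.mem_Ioi.1 ht) hM2
      simpa using ((hbc1 (z / M) (div_pos hz hM)).comp hlim).const_mul M)
    (fun t ht => by simp [hbc2 (t / M ^ 2) (div_pos ht hM2)])
  intro x y t ht
  have hyx := hΦ y x t ht
  rw [euclDist_comm] at hyx
  exact abs_le'.2 ⟨hΦ x y t ht, by rw [neg_sub]; exact hyx⟩
end
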